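/- Let P_trc = {x ∈ ℝ³ : |xᵢ| ≤ 1 for i = 1,2,3 and |x₁| + |x₂| + |x₃| ≤ 1 + √2} be the truncated cube. Then the lattice packing density of P_trc equals δ*(P_trc) = 9/(5 + 3√2), and it is attained by the packing lattice 2·B·ℤ³ where B is the matrix with columns (1, −α, 0), (0, 1, −α), (−α, 0, 1) and α = (2 − √2)/3. -/

import Mathlib

/-!
The upper bound is a statement about determinants. Write a lattice as `2 A ℤ³`. It is a packing
lattice of the truncated cube exactly when `A ℤ³` is *admissible*, i.e. has no nonzero point in the
open truncated cube (`isPackingLattice_iff_adm`), and the claim becomes `1 - α³ ≤ |det A|`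
(`det_bound`). A nonzero point of an admissible lattice inside the open cube `(-1, 1)³` lies in one
of the eight corners cut off from the cube, where `∑ |xᵢ| ≥ 1 + √2 = 3 - 3 α`, and each corner holds
at most one such point (`corner_unique`). The proof counts the pairs `±v` of these corner points and
uses Blichfeldt's principle (`volume_le_det`): a set whose lattice translates are disjoint has
volume at most `|det A|`.

* No pair: the unit cube has disjoint translates, so `|det A| ≥ 1`.
* One pair `±v`: the unit cube minus the box in which it meets its translate by `v` has disjoint
  translates; the box has edges `1 - |vᵢ|` with sum at most `3 α`, hence volume at most `α³`.
* Two pairs, in the corners `±(1, 1, 1)` and `±(1, 1, -1)` after a symmetry of the cube: two boxes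
  are removed, but a box can be added on top of the cube, and it makes up for the loss unless the
  loss is smaller than `α³` anyway (`det_bound_of_two_pairs`).
* Three or more pairs: after a symmetry there are corner points with signs `(-, +, +)`, `(+, -, +)`
  and `(+, +, -)`. Their determinant is between `1` and `4` (`one_le_triDet`, `triDet_le_four`), and
  `|det A| > 0.8`, so they generate a sublattice of index at most `4`. The index is not divisible by
  `2` or `3`, since otherwise a half or a third of a small combination of the three points would be
  a lattice point in the open truncated cube. So the index is `1` and `|det A| ≥ 1`
  (`det_bound_of_three_pairs`).

For the matrix `truncCubeB = 2 A` one has `det A = 1 - α³`, and the only nonzero points of `A ℤ³`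
in the open cube are `±(1 - α, 1 - α, 1 - α)`, which lie on the boundary of the truncated cube
(`adm_optA`). With `volume_truncCube` this gives the value of the density.
-/

open MeasureTheory

/-- The lattice `Bℤ³`. -/
def latticeOf (B : Matrix (Fin 3) (Fin 3) ℝ) : Set (Fin 3 → ℝ) :=
  {x | ∃ z : Fin 3 → ℤ, x = B.mulVec fun i => (z i : ℝ)}

/-- `Λ` is a packing lattice for `K`. -/
def IsPackingLattice (K Λ : Set (Fin 3 → ℝ)) : Prop :=
  ∀ x ∈ Λ, ∀ y ∈ Λ, x ≠ y →
    Disjoint (interior ((x + ·) '' K)) (interior ((y + ·) '' K))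

/-- The lattice packing density `δ*(K)`. -/
noncomputable def packDensity (K : Set (Fin 3 → ℝ)) : ℝ :=
  sSup {r | ∃ B : Matrix (Fin 3) (Fin 3) ℝ, IsUnit B.det ∧
    IsPackingLattice K (latticeOf B) ∧ r = (volume K).toReal / |B.det|}

/-- The truncated cube. -/
noncomputable def truncCube : Set (Fin 3 → ℝ) :=
  {x | (∀ i, |x i| ≤ 1) ∧ |x 0| + |x 1| + |x 2| ≤ 1 + Real.sqrt 2}

/-- `α = (2 − √2)/3`. -/
noncomputable def α : ℝ := (2 - Real.sqrt 2) / 3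

/-- Basis matrix (columns `(1, −α, 0), (0, 1, −α), (−α, 0, 1)`) of the optimal
lattice for the truncated cube, scaled by `2`. -/
noncomputable def truncCubeB : Matrix (Fin 3) (Fin 3) ℝ :=
  (2 : ℝ) • (Matrix.of ![![1, -α, 0], ![0, 1, -α], ![-α, 0, 1]]).transpose

/-! ### Volume of the truncated cube -/

/-- A set symmetric under the reflection `xᵢ ↦ -xᵢ` has twice the volume of its half `xᵢ ≥ 0`. -/
lemma volume_eq_two_mul_half (i : Fin 3) (S : Set (Fin 3 → ℝ)) (hS : MeasurableSet S)
    (hinv : ∀ x : Fin 3 → ℝ, (fun j => if j = i then -x j else x j) ∈ S ↔ x ∈ S) :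
    volume S = 2 * volume (S ∩ {x | 0 ≤ x i}) := by
  have hmp : MeasurePreserving (fun (x : Fin 3 → ℝ) j => if j = i then -x j else x j)
      volume volume := by
    have := volume_preserving_pi (α' := fun _ : Fin 3 => ℝ) (β' := fun _ : Fin 3 => ℝ)
      (f := fun j y => if j = i then -y else y) (by
        intro j
        by_cases h : j = i
        · simpa [h] using Measure.measurePreserving_neg (volume : Measure ℝ)
        · simp only [h, if_false]
          exact MeasurePreserving.id (volume : Measure ℝ))
    exact this
  have hm0 : MeasurableSet {x : Fin 3 → ℝ | 0 ≤ x i} :=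
    measurableSet_le measurable_const (measurable_pi_apply i)
  have hm1 : MeasurableSet {x : Fin 3 → ℝ | 0 < x i} :=
    measurableSet_lt measurable_const (measurable_pi_apply i)
  have hsplit : volume (S ∩ {x | 0 ≤ x i}) + volume (S \ {x | 0 ≤ x i}) = volume S :=
    measure_inter_add_sdiff S hm0
  have h1 : volume (S \ {x | 0 ≤ x i}) = volume (S ∩ {x | 0 < x i}) := by
    rw [← hmp.measure_preimage (hS.inter hm1).nullMeasurableSet]
    congr 1
    ext x
    have := hinv x
    simp only [Set.mem_sdiff, Set.mem_ofPred_eq, not_le, Set.mem_preimage, Set.mem_inter_iff, this,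
      if_true, Left.neg_pos_iff]
  have h2 : volume (S ∩ {x | 0 < x i}) = volume (S ∩ {x | 0 ≤ x i}) := by
    refine le_antisymm (measure_mono fun x hx => ⟨hx.1, le_of_lt (show 0 < x i from hx.2)⟩) ?_
    have hnull : volume {x : Fin 3 → ℝ | x i = 0} = 0 :=
      Measure.pi_hyperplane (fun _ : Fin 3 => (volume : Measure ℝ)) i 0
    calc volume (S ∩ {x | 0 ≤ x i})
        ≤ volume ((S ∩ {x | 0 < x i}) ∪ {x : Fin 3 → ℝ | x i = 0}) := by
          refine measure_mono fun x hx => ?_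
          rcases lt_or_eq_of_le (show 0 ≤ x i from hx.2) with h | h
          · exact Or.inl ⟨hx.1, h⟩
          · exact Or.inr h.symm
      _ ≤ _ := (measure_union_le _ _).trans (by rw [hnull, add_zero])
  rw [← hsplit, h1, h2, two_mul]

/-- A set symmetric under all three coordinate reflections has eight times the volume of its
part in the nonnegative octant. -/
lemma volume_eq_eight_mul_octant (S : Set (Fin 3 → ℝ)) (hS : MeasurableSet S)
    (hinv : ∀ x y : Fin 3 → ℝ, (∀ j, |x j| = |y j|) → x ∈ S → y ∈ S) :
    volume S = 8 * volume (S ∩ {x | ∀ i, 0 ≤ x i}) := by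
  have hm (i : Fin 3) : MeasurableSet {x : Fin 3 → ℝ | 0 ≤ x i} :=
    measurableSet_le measurable_const (measurable_pi_apply i)
  have key : ∀ (i : Fin 3) (x : Fin 3 → ℝ),
      (fun j => if j = i then -x j else x j) ∈ S ↔ x ∈ S := by
    intro i x
    constructor <;> intro h <;> refine hinv _ _ (fun j => ?_) h <;> split_ifs <;>
      simp
  rw [volume_eq_two_mul_half 0 S hS (key 0),
    volume_eq_two_mul_half 1 _ (hS.inter (hm 0)) (fun x => by
      simp only [Set.mem_inter_iff, key 1 x]; simp),
    volume_eq_two_mul_half 2 _ ((hS.inter (hm 0)).inter (hm 1)) (fun x => by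
      simp only [Set.mem_inter_iff, key 2 x]; simp), ← mul_assoc, ← mul_assoc]
  norm_num
  congr 2
  ext x
  simp [Fin.forall_fin_succ, and_assoc]

lemma volume_octahedron {r : ℝ} (hr : 0 ≤ r) :
    volume {x : Fin 3 → ℝ | |x 0| + |x 1| + |x 2| < r} = ENNReal.ofReal (4 / 3 * r ^ 3) := by
  have h := MeasureTheory.volume_sum_rpow_lt (ι := Fin 3) (p := 1) le_rfl r
  simp only [Real.rpow_one, div_one, Fin.sum_univ_three, Fintype.card_fin] at h
  rw [h, ← ENNReal.ofReal_pow hr, ← ENNReal.ofReal_mul (by positivity)]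
  congr 1
  have h4 : Real.Gamma ((3 : ℕ) + 1) = 6 := by
    rw [Real.Gamma_nat_eq_factorial]; norm_num [Nat.factorial]
  have h2 : Real.Gamma (1 + 1) = 1 := by
    have := Real.Gamma_nat_eq_factorial 1
    simpa using this
  rw [h4, h2]
  ring

lemma sqrt_two_bounds : (1.414 : ℝ) < Real.sqrt 2 ∧ Real.sqrt 2 < 1.415 :=
  ⟨Real.lt_sqrt_of_sq_lt (by norm_num), (Real.sqrt_lt' (by norm_num)).2 (by norm_num)⟩

lemma measurableSet_truncCube : MeasurableSet truncCube := by
  have h (i : Fin 3) : Measurable fun x : Fin 3 → ℝ => |x i| := by fun_prop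
  have : truncCube = (⋂ i, {x | |x i| ≤ 1}) ∩ {x | |x 0| + |x 1| + |x 2| ≤ 1 + Real.sqrt 2} := by
    ext x; simp [truncCube]
  rw [this]
  exact (MeasurableSet.iInter fun i => measurableSet_le (h i) measurable_const).inter
    (measurableSet_le (((h 0).add (h 1)).add (h 2)) measurable_const)

/-- In the nonnegative octant, `x ↦ 1 - x` carries the corner cut off from the unit cube to an
octant of the octahedron of radius `2 - √2`. -/
lemma volume_truncCube : volume truncCube = ENNReal.ofReal (56 * (Real.sqrt 2 - 1) / 3) := by
  obtain ⟨hs1, hs2⟩ := sqrt_two_bounds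
  have hsq : Real.sqrt 2 ^ 2 = 2 := Real.sq_sqrt (by norm_num)
  set s := Real.sqrt 2 with hs
  set T : Set (Fin 3 → ℝ) := {x | |x 0| + |x 1| + |x 2| < 2 - s} with hT
  have hTm : MeasurableSet T := by
    have h (i : Fin 3) : Measurable fun x : Fin 3 → ℝ => |x i| := by fun_prop
    exact measurableSet_lt (((h 0).add (h 1)).add (h 2)) measurable_const
  have hO : MeasurableSet {x : Fin 3 → ℝ | ∀ i, 0 ≤ x i} := by
    have : {x : Fin 3 → ℝ | ∀ i, 0 ≤ x i} = ⋂ i, {x | 0 ≤ x i} := by ext; simp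
    rw [this]
    exact MeasurableSet.iInter fun i => measurableSet_le measurable_const (measurable_pi_apply i)
  have hT8 := volume_eq_eight_mul_octant T hTm (by
    intro x y h hx
    simp only [hT, Set.mem_ofPred_eq] at hx ⊢
    rwa [← h 0, ← h 1, ← h 2])
  have hK8 := volume_eq_eight_mul_octant truncCube measurableSet_truncCube (by
    intro x y h hx
    simp only [truncCube, Set.mem_ofPred_eq] at hx ⊢
    simpa only [← h] using hx)
  have hmp : MeasurePreserving (fun x : Fin 3 → ℝ => 1 - x) volume volume :=
    Measure.measurePreserving_sub_left volume 1
  have hset : truncCube ∩ {x | ∀ i, 0 ≤ x i} =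
      Set.Icc 0 1 \ ((fun x : Fin 3 → ℝ => 1 - x) ⁻¹' (T ∩ {x | ∀ i, 0 ≤ x i})) := by
    ext x
    simp only [truncCube, hT, Set.mem_inter_iff, Set.mem_ofPred_eq, Set.mem_sdiff, Set.mem_Icc,
      Set.mem_preimage, Pi.le_def, Fin.forall_fin_succ, Pi.sub_apply, Pi.one_apply, Pi.zero_apply]
    constructor
    · rintro ⟨⟨h1, h2⟩, h3⟩
      simp at h1 h2 h3 ⊢
      rw [abs_of_nonneg h3.1, abs_of_nonneg h3.2.1, abs_of_nonneg h3.2.2] at *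
      refine ⟨⟨h3, h1⟩, fun h => ?_⟩
      rw [abs_of_nonneg (by linarith), abs_of_nonneg (by linarith),
        abs_of_nonneg (by linarith)] at h
      exfalso; linarith
    · rintro ⟨⟨h3, h1⟩, h⟩
      simp at h1 h3 h ⊢
      rw [abs_of_nonneg h3.1, abs_of_nonneg h3.2.1, abs_of_nonneg h3.2.2]
      refine ⟨⟨h1, ?_⟩, h3⟩
      by_contra hc
      rw [abs_of_nonneg (by linarith), abs_of_nonneg (by linarith),
        abs_of_nonneg (by linarith)] at h
      have := h (by linarith) h1.1 h1.2.1
      linarith [h1.2.2]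
  have hsub : ((fun x : Fin 3 → ℝ => 1 - x) ⁻¹' (T ∩ {x | ∀ i, 0 ≤ x i})) ⊆ Set.Icc 0 1 := by
    intro x hx
    simp only [hT, Set.mem_inter_iff, Set.mem_ofPred_eq, Set.mem_Icc,
      Set.mem_preimage, Pi.le_def, Fin.forall_fin_succ, Pi.sub_apply, Pi.one_apply,
      Pi.zero_apply] at hx ⊢
    simp at hx ⊢
    obtain ⟨h, h1⟩ := hx
    rw [abs_of_nonneg (by linarith), abs_of_nonneg (by linarith),
      abs_of_nonneg (by linarith)] at h
    refine ⟨⟨?_, ?_, ?_⟩, h1⟩ <;> linarith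
  have hTO : volume (T ∩ {x | ∀ i, 0 ≤ x i}) = ENNReal.ofReal ((2 - s) ^ 3 / 6) := by
    have h1 := volume_octahedron (r := 2 - s) (by linarith)
    rw [← hT, hT8] at h1
    have h8 : ENNReal.ofReal (4 / 3 * (2 - s) ^ 3) = 8 * ENNReal.ofReal ((2 - s) ^ 3 / 6) := by
      rw [show (8 : ENNReal) = ENNReal.ofReal 8 by norm_num, ← ENNReal.ofReal_mul (by norm_num)]
      congr 1; ring
    rw [h8] at h1
    exact (ENNReal.mul_right_inj (by norm_num) (by norm_num)).1 h1
  rw [hK8, hset, measure_sdiff hsub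
      (hmp.measurable (hTm.inter hO)).nullMeasurableSet (by
        rw [hmp.measure_preimage (hTm.inter hO).nullMeasurableSet, hTO]
        exact ENNReal.ofReal_ne_top),
    hmp.measure_preimage (hTm.inter hO).nullMeasurableSet, hTO, Real.volume_Icc_pi]
  have h3 : (2 - s) ^ 3 = 20 - 14 * s := by
    linear_combination (6 - s) * hsq
  simp only [Pi.one_apply, Pi.zero_apply, sub_zero, ENNReal.ofReal_one, Finset.prod_const_one]
  rw [← ENNReal.ofReal_one, ← ENNReal.ofReal_sub _ (by rw [h3]; linarith),
    show (8 : ENNReal) = ENNReal.ofReal 8 by norm_num, ← ENNReal.ofReal_mul (by norm_num), h3]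
  congr 1; ring

/-! ### Admissible lattices -/

/-- The point `A z` of the lattice `A ℤ³`. -/
def latPt (A : Matrix (Fin 3) (Fin 3) ℝ) (z : Fin 3 → ℤ) : Fin 3 → ℝ :=
  A.mulVec fun i => (z i : ℝ)

lemma latPt_neg (A : Matrix (Fin 3) (Fin 3) ℝ) (z : Fin 3 → ℤ) : latPt A (-z) = -latPt A z := by
  simp only [latPt, ← Matrix.mulVec_neg]; congr 1; ext i; simp

lemma latPt_add (A : Matrix (Fin 3) (Fin 3) ℝ) (z w : Fin 3 → ℤ) :
    latPt A (z + w) = latPt A z + latPt A w := by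
  simp only [latPt, ← Matrix.mulVec_add]; congr 1; ext i; simp

lemma latPt_sub (A : Matrix (Fin 3) (Fin 3) ℝ) (z w : Fin 3 → ℤ) :
    latPt A (z - w) = latPt A z - latPt A w := by
  rw [sub_eq_add_neg, latPt_add, latPt_neg, sub_eq_add_neg]

lemma latPt_zero (A : Matrix (Fin 3) (Fin 3) ℝ) : latPt A 0 = 0 := by
  simpa using latPt_sub A 0 0

lemma latPt_ne_zero {A : Matrix (Fin 3) (Fin 3) ℝ} (hA : A.det ≠ 0) {z : Fin 3 → ℤ}
    (hz : z ≠ 0) : latPt A z ≠ 0 := by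
  intro h
  have h0 := Matrix.eq_zero_of_mulVec_eq_zero hA h
  apply hz
  ext i
  have := congrFun h0 i
  simpa using this

/-- The open truncated cube. -/
def truncInt : Set (Fin 3 → ℝ) :=
  {x | (∀ i, |x i| < 1) ∧ ∑ i, |x i| < 1 + Real.sqrt 2}

/-- `A ℤ³` has no nonzero point in the open truncated cube. -/
def Adm (A : Matrix (Fin 3) (Fin 3) ℝ) : Prop :=
  ∀ z : Fin 3 → ℤ, z ≠ 0 → latPt A z ∉ truncInt

/-- The coefficient vectors of nonzero lattice points in the open cube `(-1, 1)³`. For an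
admissible lattice these points lie in the corners cut off from the cube. -/
def cornerPts (A : Matrix (Fin 3) (Fin 3) ℝ) : Set (Fin 3 → ℤ) :=
  {z | z ≠ 0 ∧ ∀ i, |latPt A z i| < 1}

/-- Blichfeldt's principle: a measurable set whose translates by `A ℤ³` are disjoint has volume
at most `|det A|`. -/
lemma volume_le_det {A : Matrix (Fin 3) (Fin 3) ℝ} (hA : A.det ≠ 0) {S : Set (Fin 3 → ℝ)}
    (hS : MeasurableSet S) (h : ∀ z : Fin 3 → ℤ, z ≠ 0 → ∀ x ∈ S, ∀ y ∈ S, y = x + latPt A z →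
      False) : volume S ≤ ENNReal.ofReal |A.det| := by
  have hdetT : A.transpose.det ≠ 0 := by rwa [Matrix.det_transpose]
  have hli : LinearIndependent ℝ (fun i => A.transpose i) :=
    Matrix.linearIndependent_rows_of_det_ne_zero hdetT
  let b : Module.Basis (Fin 3) ℝ (Fin 3 → ℝ) :=
    basisOfLinearIndependentOfCardEqFinrank hli (by simp)
  have hb : (b : Fin 3 → Fin 3 → ℝ) = A.transpose := by
    simp [b, coe_basisOfLinearIndependentOfCardEqFinrank]
  have hvol : volume (ZSpan.fundamentalDomain b) = ENNReal.ofReal |A.det| := by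
    rw [ZSpan.volume_fundamentalDomain, hb]
    congr 2
    exact Matrix.det_transpose A
  by_contra hlt
  rw [not_le, ← hvol] at hlt
  have fund := ZSpan.isAddFundamentalDomain' b (volume : Measure (Fin 3 → ℝ))
  have : Countable (Submodule.span ℤ (Set.range b)).toAddSubgroup :=
    inferInstanceAs (Countable (Submodule.span ℤ (Set.range b)))
  obtain ⟨x, y, hxy, hd⟩ :=
    exists_pair_mem_lattice_not_disjoint_vadd fund hS.nullMeasurableSet hlt
  rw [Set.not_disjoint_iff] at hd
  obtain ⟨p, ⟨s, hs, hs'⟩, ⟨t, ht, ht'⟩⟩ := hd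
  have hmem : (y - x : Fin 3 → ℝ) ∈ Submodule.span ℤ (Set.range b) :=
    Submodule.sub_mem _ y.2 x.2
  obtain ⟨z, hz⟩ := (Submodule.mem_span_range_iff_exists_fun ℤ).1 hmem
  have hz' : latPt A z = (y - x : Fin 3 → ℝ) := by
    rw [← hz, hb]
    ext i
    simp [latPt, Matrix.mulVec, dotProduct, Fin.sum_univ_three, mul_comm]
  refine h z ?_ t ht s hs ?_
  · rintro rfl
    rw [latPt_zero] at hz'
    exact hxy (Subtype.ext (sub_eq_zero.1 hz'.symm).symm)
  · rw [hz']
    have h1 : (x : Fin 3 → ℝ) + s = p := hs'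
    have h2 : (y : Fin 3 → ℝ) + t = p := ht'
    rw [eq_comm, ← sub_eq_zero]
    have : (x : Fin 3 → ℝ) + s = y + t := h1.trans h2.symm
    linear_combination -this

lemma adm_corner {A : Matrix (Fin 3) (Fin 3) ℝ} (hA : Adm A) {z : Fin 3 → ℤ}
    (hz : z ∈ cornerPts A) :
    1 + Real.sqrt 2 ≤ |latPt A z 0| + |latPt A z 1| + |latPt A z 2| := by
  by_contra hc
  exact hA z hz.1 ⟨hz.2, by rw [Fin.sum_univ_three]; linarith⟩

lemma adm_of_lt {A : Matrix (Fin 3) (Fin 3) ℝ} (hA : Adm A) {z : Fin 3 → ℤ}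
    (h0 : |latPt A z 0| < 1) (h1 : |latPt A z 1| < 1) (h2 : |latPt A z 2| < 1)
    (hs : |latPt A z 0| + |latPt A z 1| + |latPt A z 2| < 2.414) : z = 0 := by
  by_contra hz
  have := adm_corner hA (z := z) ⟨hz, by simp [Fin.forall_fin_succ, h0, h1, h2]⟩
  linarith [sqrt_two_bounds.1]

lemma cornerPts_neg {A : Matrix (Fin 3) (Fin 3) ℝ} {z : Fin 3 → ℤ} (hz : z ∈ cornerPts A) :
    -z ∈ cornerPts A :=
  ⟨neg_ne_zero.2 hz.1, by simpa [latPt_neg] using hz.2⟩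

/-- The coordinates of a corner point are bounded away from zero. -/
lemma corner_abs_gt {A : Matrix (Fin 3) (Fin 3) ℝ} (hA : Adm A) {z : Fin 3 → ℤ}
    (hz : z ∈ cornerPts A) (i : Fin 3) : 0.414 < |latPt A z i| := by
  have h := adm_corner hA hz
  have h0 := hz.2 0
  have h1 := hz.2 1
  have h2 := hz.2 2
  have := sqrt_two_bounds.1
  fin_cases i <;> simp <;> linarith

/-- Each corner of the cube contains at most one lattice point. -/
lemma corner_unique {A : Matrix (Fin 3) (Fin 3) ℝ} (hA : Adm A) {z w : Fin 3 → ℤ}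
    (hz : z ∈ cornerPts A) (hw : w ∈ cornerPts A)
    (h : ∀ i, 0 < latPt A z i ↔ 0 < latPt A w i) : z = w := by
  have key : ∀ i, |latPt A (z - w) i| < 0.6 := by
    intro i
    have a := corner_abs_gt hA hz i
    have b := corner_abs_gt hA hw i
    have c := hz.2 i
    have d := hw.2 i
    have e := h i
    rw [latPt_sub, Pi.sub_apply]
    rcases lt_or_ge 0 (latPt A z i) with h1 | h1
    · have h2 := e.1 h1
      rw [abs_of_pos h1] at a c
      rw [abs_of_pos h2] at b d
      rw [abs_lt]; constructor <;> linarith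
    · have h2 : latPt A w i ≤ 0 := not_lt.1 fun hh => absurd (e.2 hh) (not_lt.2 h1)
      rw [abs_of_nonpos h1] at a c
      rw [abs_of_nonpos h2] at b d
      rw [abs_lt]; constructor <;> linarith
  have k0 := key 0
  have k1 := key 1
  have k2 := key 2
  exact sub_eq_zero.1 (adm_of_lt hA (by linarith) (by linarith) (by linarith) (by linarith))

/-! ### Symmetries -/

lemma latPt_diagonal_mul (A : Matrix (Fin 3) (Fin 3) ℝ) (s : Fin 3 → ℝ) (z : Fin 3 → ℤ)
    (i : Fin 3) : latPt (Matrix.diagonal s * A) z i = s i * latPt A z i := by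
  simp [latPt, ← Matrix.mulVec_mulVec, Matrix.mulVec_diagonal]

lemma latPt_submatrix (A : Matrix (Fin 3) (Fin 3) ℝ) (σ : Equiv.Perm (Fin 3)) (z : Fin 3 → ℤ)
    (i : Fin 3) : latPt (A.submatrix σ id) z i = latPt A z (σ i) := by
  simp [latPt, Matrix.mulVec, dotProduct]

lemma adm_diagonal_mul {A : Matrix (Fin 3) (Fin 3) ℝ} (hA : Adm A) {s : Fin 3 → ℝ}
    (hs : ∀ i, |s i| = 1) : Adm (Matrix.diagonal s * A) := by
  intro z hz h
  apply hA z hz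
  simpa [truncInt, latPt_diagonal_mul, abs_mul, hs] using h

lemma cornerPts_diagonal_mul {A : Matrix (Fin 3) (Fin 3) ℝ} {s : Fin 3 → ℝ}
    (hs : ∀ i, |s i| = 1) : cornerPts (Matrix.diagonal s * A) = cornerPts A := by
  simp [cornerPts, latPt_diagonal_mul, abs_mul, hs]

lemma abs_det_diagonal_mul (A : Matrix (Fin 3) (Fin 3) ℝ) {s : Fin 3 → ℝ}
    (hs : ∀ i, |s i| = 1) : |(Matrix.diagonal s * A).det| = |A.det| := by
  simp [Matrix.det_mul, Matrix.det_diagonal, abs_mul, Finset.abs_prod, hs]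

lemma adm_submatrix {A : Matrix (Fin 3) (Fin 3) ℝ} (hA : Adm A) (σ : Equiv.Perm (Fin 3)) :
    Adm (A.submatrix σ id) := by
  intro z hz h
  apply hA z hz
  simp only [truncInt, Set.mem_ofPred_eq, latPt_submatrix] at h ⊢
  rw [Equiv.sum_comp σ (fun i => |latPt A z i|)] at h
  exact ⟨fun i => by simpa using h.1 (σ.symm i), h.2⟩

lemma cornerPts_submatrix {A : Matrix (Fin 3) (Fin 3) ℝ} (σ : Equiv.Perm (Fin 3)) :
    cornerPts (A.submatrix σ id) = cornerPts A := by
  ext z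
  simp only [cornerPts, latPt_submatrix, Set.mem_ofPred_eq]
  exact and_congr_right fun _ => ⟨fun h i => by simpa using h (σ.symm i), fun h i => h _⟩

lemma abs_det_submatrix (A : Matrix (Fin 3) (Fin 3) ℝ) (σ : Equiv.Perm (Fin 3)) :
    |(A.submatrix σ id).det| = |A.det| := by
  rw [Matrix.det_permute]
  rcases Int.units_eq_one_or (Equiv.Perm.sign σ) with h | h <;> simp [h]

/-! ### At most one pair of corner points -/

/-- The half-open box `∏ [aᵢ, bᵢ)`. -/
def hbox (a b : Fin 3 → ℝ) : Set (Fin 3 → ℝ) := Set.pi Set.univ fun i => Set.Ico (a i) (b i)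

lemma mem_hbox {a b x : Fin 3 → ℝ} : x ∈ hbox a b ↔
    (a 0 ≤ x 0 ∧ x 0 < b 0) ∧ (a 1 ≤ x 1 ∧ x 1 < b 1) ∧ (a 2 ≤ x 2 ∧ x 2 < b 2) := by
  simp [hbox, Set.mem_pi, Fin.forall_fin_succ]

lemma measurableSet_hbox (a b : Fin 3 → ℝ) : MeasurableSet (hbox a b) :=
  MeasurableSet.univ_pi fun _ => measurableSet_Ico

lemma volume_hbox {a b : Fin 3 → ℝ} (h : ∀ i, a i ≤ b i) :
    volume (hbox a b) = ENNReal.ofReal ((b 0 - a 0) * (b 1 - a 1) * (b 2 - a 2)) := by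
  have h0 := sub_nonneg.2 (h 0)
  have h1 := sub_nonneg.2 (h 1)
  rw [hbox, Real.volume_pi_Ico, Fin.prod_univ_three, ENNReal.ofReal_mul (by positivity),
    ENNReal.ofReal_mul h0]

lemma volume_unit_hbox : volume (hbox 0 1) = 1 := by
  rw [volume_hbox (fun i => by simp)]; simp

lemma amgm_three {a b c : ℝ} (ha : 0 ≤ a) (hb : 0 ≤ b) (hc : 0 ≤ c) :
    a * b * c ≤ ((a + b + c) / 3) ^ 3 := by
  nlinarith [mul_nonneg ha (sq_nonneg (b - c)), mul_nonneg hb (sq_nonneg (a - c)),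
    mul_nonneg hc (sq_nonneg (a - b)), mul_nonneg ha (sq_nonneg (a - b)),
    mul_nonneg ha (sq_nonneg (a - c)), mul_nonneg hb (sq_nonneg (a - b)),
    mul_nonneg hb (sq_nonneg (b - c)), mul_nonneg hc (sq_nonneg (a - c)),
    mul_nonneg hc (sq_nonneg (b - c))]

lemma alpha_cube_bounds : (0.0074 : ℝ) < α ^ 3 ∧ 0 < α := by
  have h := sqrt_two_bounds
  have h1 : (0.195 : ℝ) ≤ α := by unfold α; linarith [h.2]
  refine ⟨?_, by linarith⟩
  have : (0.195 : ℝ) ^ 3 ≤ α ^ 3 := by gcongr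
  norm_num at this ⊢
  linarith

lemma det_bound_of_no_corner {A : Matrix (Fin 3) (Fin 3) ℝ} (hdet : A.det ≠ 0)
    (hT : cornerPts A = ∅) : 1 ≤ |A.det| := by
  have h := volume_le_det hdet (measurableSet_hbox 0 1) (by
    intro z hz x hx y hy hxy
    rw [mem_hbox] at hx hy
    simp only [Pi.zero_apply, Pi.one_apply] at hx hy
    have h0 := congrFun hxy 0
    have h1 := congrFun hxy 1
    have h2 := congrFun hxy 2
    simp only [Pi.add_apply] at h0 h1 h2
    have : z ∈ cornerPts A := by
      refine ⟨hz, ?_⟩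
      simp only [Fin.forall_fin_succ, abs_lt]
      simp
      refine ⟨⟨?_, ?_⟩, ⟨?_, ?_⟩, ⟨?_, ?_⟩⟩ <;> linarith
    rw [hT] at this
    exact this)
  rw [volume_unit_hbox] at h
  simpa using h

/-- If the only corner points are `±v`, the unit cube minus its overlap with the translate by `v`
packs; by the arithmetic-geometric mean inequality the overlap has volume at most `α³`. -/
lemma det_bound_of_one_pair {A : Matrix (Fin 3) (Fin 3) ℝ} (hdet : A.det ≠ 0) (hA : Adm A)
    {z₁ : Fin 3 → ℤ} (hz₁ : z₁ ∈ cornerPts A) (hpos : ∀ i, 0 < latPt A z₁ i)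
    (hT : ∀ z ∈ cornerPts A, z = z₁ ∨ z = -z₁) : 1 - α ^ 3 ≤ |A.det| := by
  set v := latPt A z₁ with hv
  have p0 := hpos 0
  have p1 := hpos 1
  have p2 := hpos 2
  have l0 : v 0 < 1 := (abs_lt.1 (hz₁.2 0)).2
  have l1 : v 1 < 1 := (abs_lt.1 (hz₁.2 1)).2
  have l2 : v 2 < 1 := (abs_lt.1 (hz₁.2 2)).2
  have hsum := adm_corner hA hz₁
  rw [← hv, abs_of_pos p0, abs_of_pos p1, abs_of_pos p2] at hsum
  have h := volume_le_det hdet ((measurableSet_hbox 0 1).diff (measurableSet_hbox v 1)) (by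
    rintro z hz x ⟨hx, hx'⟩ y ⟨hy, hy'⟩ hxy
    rw [mem_hbox] at hx hy hx' hy'
    simp only [Pi.zero_apply, Pi.one_apply] at hx hy hx' hy'
    have h0 := congrFun hxy 0
    have h1 := congrFun hxy 1
    have h2 := congrFun hxy 2
    simp only [Pi.add_apply] at h0 h1 h2
    have : z ∈ cornerPts A := by
      refine ⟨hz, ?_⟩
      simp only [Fin.forall_fin_succ, abs_lt]
      simp
      refine ⟨⟨?_, ?_⟩, ⟨?_, ?_⟩, ⟨?_, ?_⟩⟩ <;> linarith
    rcases hT z this with rfl | rfl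
    · rw [← hv] at h0 h1 h2
      apply hy'
      refine ⟨⟨?_, ?_⟩, ⟨?_, ?_⟩, ⟨?_, ?_⟩⟩ <;> linarith
    · rw [latPt_neg, ← hv] at h0 h1 h2
      simp only [Pi.neg_apply] at h0 h1 h2
      apply hx'
      refine ⟨⟨?_, ?_⟩, ⟨?_, ?_⟩, ⟨?_, ?_⟩⟩ <;> linarith)
  have hsub : hbox v 1 ⊆ hbox 0 1 := by
    intro x hx
    rw [mem_hbox] at hx ⊢
    simp only [Pi.zero_apply, Pi.one_apply] at hx ⊢
    refine ⟨⟨?_, ?_⟩, ⟨?_, ?_⟩, ⟨?_, ?_⟩⟩ <;> linarith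
  have hvb : volume (hbox v 1) = ENNReal.ofReal ((1 - v 0) * (1 - v 1) * (1 - v 2)) := by
    have hle : ∀ i, v i ≤ (1 : Fin 3 → ℝ) i := fun i => (abs_lt.1 (hz₁.2 i)).2.le
    rw [volume_hbox hle]; simp
  have hag := amgm_three (sub_nonneg.2 l0.le) (sub_nonneg.2 l1.le) (sub_nonneg.2 l2.le)
  have hle : ((1 - v 0 + (1 - v 1) + (1 - v 2)) / 3) ^ 3 ≤ α ^ 3 := by
    refine pow_le_pow_left₀ (by linarith) ?_ 3
    unfold α; linarith
  have hnn : 0 ≤ (1 - v 0) * (1 - v 1) * (1 - v 2) :=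
    mul_nonneg (mul_nonneg (by linarith) (by linarith)) (by linarith)
  rw [measure_sdiff hsub (measurableSet_hbox _ _).nullMeasurableSet
    (by rw [hvb]; exact ENNReal.ofReal_ne_top), volume_unit_hbox, hvb, ← ENNReal.ofReal_one,
    ← ENNReal.ofReal_sub _ hnn, ENNReal.ofReal_le_ofReal_iff (abs_nonneg _)] at h
  linarith

/-! ### Two pairs of corner points -/

/-- Volume bookkeeping for two pairs of corner points, in terms of the deficits `1 - |vᵢ|`: unless
the deficits of the two points in some coordinate add up to almost one, the volume removed from the cube is at most the volume of the
box added above it. -/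
lemma loss_le_gain {a b c a' b' c' : ℝ} (ha : 0 < a) (hb : 0 < b) (hc : 0 < c)
    (ha' : 0 < a') (hb' : 0 < b') (hc' : 0 < c') (h : a + b + c ≤ 0.59)
    (h' : a' + b' + c' ≤ 0.59) (x : a + a' ≤ 0.97) (y : b + b' ≤ 0.97) (z : c + c' ≤ 0.97) :
    a * b * c + a' * b' * c' ≤ (1 - a - a') * (1 - b - b') * (1 - c - c') := by
  have h1 : a * b * c ≤ 0.0077 := (amgm_three ha.le hb.le hc.le).trans
    ((pow_le_pow_left₀ (by positivity) (show (a + b + c) / 3 ≤ 0.197 by linarith) 3).trans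
      (by norm_num))
  have h2 : a' * b' * c' ≤ 0.0077 := (amgm_three ha'.le hb'.le hc'.le).trans
    ((pow_le_pow_left₀ (by positivity) (show (a' + b' + c') / 3 ≤ 0.197 by linarith) 3).trans
      (by norm_num))
  have key : ∀ p q r : ℝ, 0 ≤ p → 0 ≤ q → p ≤ r → q ≤ r → r ≤ 0.97 → p + q + r ≤ 1.18 →
      p + q + r ≥ 0 → 0.0154 ≤ (1 - p) * (1 - q) * (1 - r) := by
    intro p q r hp hq hpr hqr hr hs _
    have e1 : 1 - p - q ≤ (1 - p) * (1 - q) := by nlinarith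
    have e2 : (1 - p - q) * (1 - r) ≤ (1 - p) * (1 - q) * (1 - r) :=
      mul_le_mul_of_nonneg_right e1 (by linarith)
    rcases le_total r 0.39 with h3 | h3
    · nlinarith
    · nlinarith
  have hsum : a + a' + (b + b') + (c + c') ≤ 1.18 := by linarith
  have e : (1 - a - a') * (1 - b - b') * (1 - c - c') =
      (1 - (a + a')) * (1 - (b + b')) * (1 - (c + c')) := by ring
  rw [e]
  rcases le_total (a + a') (b + b') with h3 | h3
  · rcases le_total (b + b') (c + c') with h4 | h4
    · linarith [key (a + a') (b + b') (c + c') (by linarith) (by linarith) (by linarith)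
        h4 z (by linarith) (by linarith)]
    · linarith [key (a + a') (c + c') (b + b') (by linarith) (by linarith) h3
        h4 y (by linarith) (by linarith)]
  · rcases le_total (a + a') (c + c') with h4 | h4
    · linarith [key (a + a') (b + b') (c + c') (by linarith) (by linarith) h4
        (by linarith) z (by linarith) (by linarith)]
    · linarith [key (b + b') (c + c') (a + a') (by linarith) (by linarith) h3
        h4 x (by linarith) (by linarith)]

/-- When the deficits of the two points in one coordinate add up to almost one, the volume removed
from the cube is itself small. -/
lemma loss_small {a b c a' b' c' : ℝ} (hb : 0 < b) (hc : 0 < c)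
    (hb' : 0 < b') (hc' : 0 < c') (h : a + b + c ≤ 0.59)
    (h' : a' + b' + c' ≤ 0.59) (x : 0.97 ≤ a + a') :
    a * (b * c) + a' * (b' * c') ≤ 0.0074 := by
  have e1 : a * (b * c) ≤ 0.59 * (b * c) :=
    mul_le_mul_of_nonneg_right (by linarith) (by positivity)
  have e2 : a' * (b' * c') ≤ 0.59 * (b' * c') :=
    mul_le_mul_of_nonneg_right (by linarith) (by positivity)
  have e3 : b * c + b' * c' ≤ (b + b') * (c + c') := by nlinarith [mul_pos hb hc', mul_pos hb' hc]
  have e4 : (b + b') * (c + c') ≤ 0.105 ^ 2 := by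
    nlinarith [sq_nonneg (b + b' - (c + c'))]
  norm_num at e4 ⊢
  linarith

/-- If the only corner points are `±v` in the corners `±(1,1,1)` and `±v'` in the corners
`±(1,1,-1)`, the unit cube minus its overlaps with the translates by `v` and `v'`, together with a
box of height `(v - v')₂ - 1` placed on top of it, packs. -/
lemma det_bound_of_two_pairs {A : Matrix (Fin 3) (Fin 3) ℝ} (hdet : A.det ≠ 0) (hA : Adm A)
    {z₁ z₂ : Fin 3 → ℤ} (hz₁ : z₁ ∈ cornerPts A) (hz₂ : z₂ ∈ cornerPts A)
    (hpos : ∀ i, 0 < latPt A z₁ i) (hq0 : 0 < latPt A z₂ 0) (hq1 : 0 < latPt A z₂ 1)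
    (hq2 : latPt A z₂ 2 < 0)
    (hT : ∀ z ∈ cornerPts A, z = z₁ ∨ z = -z₁ ∨ z = z₂ ∨ z = -z₂) :
    1 - α ^ 3 ≤ |A.det| := by
  have hα := alpha_cube_bounds.1
  have hs2 := sqrt_two_bounds.1
  -- The point `v - v'` is not in the open truncated cube, which forces its last coordinate
  -- to be at least one.
  have hw : 1 ≤ latPt A z₁ 2 - latPt A z₂ 2 := by
    by_contra hc
    have key : ∀ i, 0 < latPt A z₂ i → |latPt A (z₁ - z₂) i| < 0.6 := by
      intro i hi
      have a := corner_abs_gt hA hz₁ i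
      have b := corner_abs_gt hA hz₂ i
      have c := hz₁.2 i
      have d := hz₂.2 i
      rw [abs_of_pos (hpos i)] at a c
      rw [abs_of_pos hi] at b d
      rw [latPt_sub, Pi.sub_apply, abs_lt]; constructor <;> linarith
    have k0 := key 0 hq0
    have k1 := key 1 hq1
    have k2 : |latPt A (z₁ - z₂) 2| < 1 := by
      have := hpos 2
      rw [latPt_sub, Pi.sub_apply, abs_lt]; constructor <;> linarith
    have h0 := adm_of_lt hA (by linarith) (by linarith) k2 (by linarith)
    rw [sub_eq_zero] at h0
    rw [← h0] at hq2
    linarith [hpos 2]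
  have hcl : ∀ z : Fin 3 → ℤ, z ≠ 0 → ∀ n : Fin 3 → ℝ, n = latPt A z → (-1 < n 0 ∧ n 0 < 1) →
      (-1 < n 1 ∧ n 1 < 1) → (-1 < n 2 ∧ n 2 < 1) →
      n = latPt A z₁ ∨ n = -latPt A z₁ ∨ n = latPt A z₂ ∨ n = -latPt A z₂ := by
    rintro z hz n rfl h0 h1 h2
    have : z ∈ cornerPts A := by
      refine ⟨hz, ?_⟩
      simp only [Fin.forall_fin_succ, abs_lt]
      simp
      exact ⟨h0, h1, h2⟩
    rcases hT z this with rfl | rfl | rfl | rfl <;> simp [latPt_neg]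
  have hd : latPt A (z₁ - z₂) = latPt A z₁ - latPt A z₂ := latPt_sub _ _ _
  have hsubz : ∀ z, latPt A (z - (z₁ - z₂)) = latPt A z - (latPt A z₁ - latPt A z₂) := by
    intro z; rw [latPt_sub, hd]
  have hsum := adm_corner hA hz₁
  have hsum' := adm_corner hA hz₂
  have p0 := hpos 0
  have p1 := hpos 1
  have p2 := hpos 2
  rw [abs_of_pos p0, abs_of_pos p1, abs_of_pos p2] at hsum
  rw [abs_of_pos hq0, abs_of_pos hq1, abs_of_neg hq2] at hsum'
  have l0 := (abs_lt.1 (hz₁.2 0)).2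
  have l1 := (abs_lt.1 (hz₁.2 1)).2
  have l2 := (abs_lt.1 (hz₁.2 2)).2
  have m0 := (abs_lt.1 (hz₂.2 0)).2
  have m1 := (abs_lt.1 (hz₂.2 1)).2
  have m2 := (abs_lt.1 (hz₂.2 2)).1
  generalize latPt A z₁ = v at *
  generalize latPt A z₂ = v' at *
  set R₁ := hbox v 1 with hR₁
  set R₂ := hbox ![v' 0, v' 1, 0] ![1, 1, 1 + v' 2] with hR₂
  set C := hbox 0 1 \ (R₁ ∪ R₂) with hC
  set G := hbox ![1 - v' 0, 1 - v' 1, 1] ![v 0, v 1, v 2 - v' 2] with hG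
  have memC : ∀ x, x ∈ C → ((0 ≤ x 0 ∧ x 0 < 1) ∧ (0 ≤ x 1 ∧ x 1 < 1) ∧ (0 ≤ x 2 ∧ x 2 < 1)) ∧
      ¬ (v 0 ≤ x 0 ∧ v 1 ≤ x 1 ∧ v 2 ≤ x 2) ∧ ¬ (v' 0 ≤ x 0 ∧ v' 1 ≤ x 1 ∧ x 2 < 1 + v' 2) := by
    rintro x ⟨hx, hx'⟩
    rw [mem_hbox] at hx
    simp only [hR₁, hR₂, Set.mem_union, mem_hbox, not_or] at hx'
    simp at hx hx'
    refine ⟨hx, fun h => ?_, fun h => ?_⟩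
    · linarith [hx'.1 h.1 hx.1.2 h.2.1 hx.2.1.2 h.2.2]
    · linarith [hx'.2 h.1 hx.1.2 h.2.1 hx.2.1.2 hx.2.2.1]
  have memG : ∀ x, x ∈ G → (1 - v' 0 ≤ x 0 ∧ x 0 < v 0) ∧ (1 - v' 1 ≤ x 1 ∧ x 1 < v 1) ∧
      (1 ≤ x 2 ∧ x 2 < v 2 - v' 2) := by
    intro x hx
    rw [hG, mem_hbox] at hx
    simpa using hx
  have hmeasC : MeasurableSet C := (measurableSet_hbox _ _).diff
    ((measurableSet_hbox _ _).union (measurableSet_hbox _ _))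
  have hmeasG : MeasurableSet G := measurableSet_hbox _ _
  have hCC : ∀ z : Fin 3 → ℤ, z ≠ 0 → ∀ x ∈ C, ∀ y ∈ C, y = x + latPt A z → False := by
    intro z hz x hx y hy hxy
    obtain ⟨⟨hx0, hx1, hx2⟩, hx3, hx4⟩ := memC x hx
    obtain ⟨⟨hy0, hy1, hy2⟩, hy3, hy4⟩ := memC y hy
    have hn := hcl z hz
    generalize latPt A z = n at *
    have h0 := congrFun hxy 0
    have h1 := congrFun hxy 1
    have h2 := congrFun hxy 2
    simp only [Pi.add_apply] at h0 h1 h2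
    rcases hn n rfl ⟨by linarith, by linarith⟩ ⟨by linarith, by linarith⟩
      ⟨by linarith, by linarith⟩ with rfl | rfl | rfl | rfl <;>
      try simp only [Pi.neg_apply] at h0 h1 h2
    · exact hy3 ⟨by linarith, by linarith, by linarith⟩
    · exact hx3 ⟨by linarith, by linarith, by linarith⟩
    · exact hy4 ⟨by linarith, by linarith, by linarith⟩
    · exact hx4 ⟨by linarith, by linarith, by linarith⟩
  have hGG : ∀ z : Fin 3 → ℤ, z ≠ 0 → ∀ x ∈ G, ∀ y ∈ G, y = x + latPt A z → False := by
    intro z hz x hx y hy hxy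
    obtain ⟨hx0, hx1, hx2⟩ := memG x hx
    obtain ⟨hy0, hy1, hy2⟩ := memG y hy
    have hn := hcl z hz
    generalize latPt A z = n at *
    have h0 := congrFun hxy 0
    have h1 := congrFun hxy 1
    have h2 := congrFun hxy 2
    simp only [Pi.add_apply] at h0 h1 h2
    rcases hn n rfl ⟨by linarith, by linarith⟩ ⟨by linarith, by linarith⟩
      ⟨by linarith, by linarith⟩ with rfl | rfl | rfl | rfl <;>
      (try simp only [Pi.neg_apply] at h0 h1 h2) <;> linarith
  have hCG : ∀ z : Fin 3 → ℤ, z ≠ 0 → ∀ x ∈ C, ∀ y ∈ G, y = x + latPt A z → False := by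
    intro z hz x hx y hy hxy
    obtain ⟨⟨hx0, hx1, hx2⟩, hx3, hx4⟩ := memC x hx
    obtain ⟨hy0, hy1, hy2⟩ := memG y hy
    have hn := hcl z hz
    have hn' := hcl (z - (z₁ - z₂))
    rw [hsubz] at hn'
    have hzd : z - (z₁ - z₂) = 0 → latPt A z = v - v' := by
      intro h; rw [sub_eq_zero.1 h, hd]
    generalize latPt A z = n at *
    have h0 := congrFun hxy 0
    have h1 := congrFun hxy 1
    have h2 := congrFun hxy 2
    simp only [Pi.add_apply] at h0 h1 h2
    rcases lt_or_ge (n 2) 1 with hlt | hge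
    · rcases hn n rfl ⟨by linarith, by linarith⟩ ⟨by linarith, by linarith⟩
        ⟨by linarith, by linarith⟩ with rfl | rfl | rfl | rfl <;>
        (try simp only [Pi.neg_apply] at h0 h1 h2) <;> linarith
    -- If the points are at height distance at least one, shift one of them by `v - v'`.
    · by_cases hz0 : z - (z₁ - z₂) = 0
      · have := congrFun (hzd hz0) 2
        simp only [Pi.sub_apply] at this
        linarith
      · have := hn' hz0 _ rfl
        simp only [Pi.sub_apply] at this
        rcases this ⟨by linarith, by linarith⟩ ⟨by linarith, by linarith⟩
          ⟨by linarith, by linarith⟩ with h | h | h | h <;>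
          · have := congrFun h 2
            simp only [Pi.sub_apply, Pi.neg_apply] at this
            linarith
  have hvR₁ : volume R₁ = ENNReal.ofReal ((1 - v 0) * (1 - v 1) * (1 - v 2)) := by
    rw [hR₁, volume_hbox (by simp [Fin.forall_fin_succ, l0.le, l1.le, l2.le])]; simp
  have hvR₂ : volume R₂ = ENNReal.ofReal ((1 - v' 0) * (1 - v' 1) * (1 + v' 2)) := by
    rw [hR₂, volume_hbox (by
      simp [Fin.forall_fin_succ, m0.le, m1.le]; linarith)]
    simp
  have n1 : 0 ≤ (1 - v 0) * (1 - v 1) * (1 - v 2) :=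
    mul_nonneg (mul_nonneg (by linarith) (by linarith)) (by linarith)
  have n2 : 0 ≤ (1 - v' 0) * (1 - v' 1) * (1 + v' 2) :=
    mul_nonneg (mul_nonneg (by linarith) (by linarith)) (by linarith)
  have hvC : ENNReal.ofReal (1 - ((1 - v 0) * (1 - v 1) * (1 - v 2) +
      (1 - v' 0) * (1 - v' 1) * (1 + v' 2))) ≤ volume C := by
    refine le_trans ?_ (le_measure_sdiff (s₁ := hbox 0 1))
    rw [volume_unit_hbox, ENNReal.ofReal_sub _ (add_nonneg n1 n2), ENNReal.ofReal_one,
      ENNReal.ofReal_add n1 n2, ← hvR₁, ← hvR₂]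
    exact tsub_le_tsub_left (measure_union_le _ _) _
  by_cases hsmall : (1 - v 0) * (1 - v 1) * (1 - v 2) +
      (1 - v' 0) * (1 - v' 1) * (1 + v' 2) ≤ 0.0074
  · have h := hvC.trans (volume_le_det hdet hmeasC hCC)
    rw [ENNReal.ofReal_le_ofReal_iff (abs_nonneg _)] at h
    linarith
  · have x : (1 - v 0) + (1 - v' 0) ≤ 0.97 := by
      by_contra hc
      apply hsmall
      have := loss_small (a := 1 - v 0) (b := 1 - v 1) (c := 1 - v 2) (a' := 1 - v' 0)
        (b' := 1 - v' 1) (c' := 1 + v' 2) (by linarith) (by linarith) (by linarith) (by linarith)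
        (by linarith) (by linarith) (by linarith)
      linarith
    have y : (1 - v 1) + (1 - v' 1) ≤ 0.97 := by
      by_contra hc
      apply hsmall
      have := loss_small (a := 1 - v 1) (b := 1 - v 0) (c := 1 - v 2) (a' := 1 - v' 1)
        (b' := 1 - v' 0) (c' := 1 + v' 2) (by linarith) (by linarith) (by linarith) (by linarith)
        (by linarith) (by linarith) (by linarith)
      linarith
    have z : (1 - v 2) + (1 + v' 2) ≤ 0.97 := by
      by_contra hc
      apply hsmall
      have := loss_small (a := 1 - v 2) (b := 1 - v 1) (c := 1 - v 0) (a' := 1 + v' 2)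
        (b' := 1 - v' 1) (c' := 1 - v' 0) (by linarith) (by linarith) (by linarith) (by linarith)
        (by linarith) (by linarith) (by linarith)
      linarith
    have hgain := loss_le_gain (a := 1 - v 0) (b := 1 - v 1) (c := 1 - v 2) (a' := 1 - v' 0)
      (b' := 1 - v' 1) (c' := 1 + v' 2) (by linarith) (by linarith) (by linarith) (by linarith)
      (by linarith) (by linarith) (by linarith) (by linarith) x y z
    have hvG : volume G = ENNReal.ofReal ((v 0 - (1 - v' 0)) * (v 1 - (1 - v' 1)) *
        (v 2 - v' 2 - 1)) := by
      rw [hG, volume_hbox (by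
        simp [Fin.forall_fin_succ]; refine ⟨?_, ?_, ?_⟩ <;> linarith)]
      simp
    have hdisj : Disjoint C G := by
      rw [Set.disjoint_left]
      intro x hx hx'
      linarith [(memC x hx).1.2.2.2, (memG x hx').2.2.1]
    have h := volume_le_det hdet (hmeasC.union hmeasG) (by
      rintro z hz x (hx | hx) y (hy | hy) hxy
      · exact hCC z hz x hx y hy hxy
      · exact hCG z hz x hx y hy hxy
      · exact hCG (-z) (neg_ne_zero.2 hz) y hy x hx (by rw [hxy, latPt_neg]; abel)
      · exact hGG z hz x hx y hy hxy)
    rw [measure_union hdisj hmeasG, hvG] at h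
    have h' := (add_le_add_left hvC _).trans h
    have n3 : 0 ≤ (v 0 - (1 - v' 0)) * (v 1 - (1 - v' 1)) * (v 2 - v' 2 - 1) :=
      mul_nonneg (mul_nonneg (by linarith) (by linarith)) (by linarith)
    have n4 := amgm_three (sub_nonneg.2 l0.le) (sub_nonneg.2 l1.le) (sub_nonneg.2 l2.le)
    have n5 : (1 - v 0) * (1 - v 1) * (1 - v 2) ≤ 0.25 := n4.trans
      ((pow_le_pow_left₀ (by linarith) (show _ ≤ (0.5 : ℝ) by linarith) 3).trans (by norm_num))
    have n6 := amgm_three (sub_nonneg.2 m0.le) (sub_nonneg.2 m1.le) (show 0 ≤ 1 + v' 2 by linarith)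
    have n7 : (1 - v' 0) * (1 - v' 1) * (1 + v' 2) ≤ 0.25 := n6.trans
      ((pow_le_pow_left₀ (by linarith) (show _ ≤ (0.5 : ℝ) by linarith) 3).trans (by norm_num))
    rw [← ENNReal.ofReal_add (by linarith) n3, ENNReal.ofReal_le_ofReal_iff (abs_nonneg _)] at h'
    have e : (v 0 - (1 - v' 0)) * (v 1 - (1 - v' 1)) * (v 2 - v' 2 - 1) =
      (1 - (1 - v 0) - (1 - v' 0)) * (1 - (1 - v 1) - (1 - v' 1)) *
        (1 - (1 - v 2) - (1 + v' 2)) := by ring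
    rw [e] at h'
    linarith

/-! ### Three pairs of corner points -/

/-- The determinant of the matrix with columns `(-p₁, q₁, r₁)`, `(p₂, -q₂, r₂)`,
`(p₃, q₃, -r₃)`. -/
def triDet (p₁ q₁ r₁ p₂ q₂ r₂ p₃ q₃ r₃ : ℝ) : ℝ :=
  -p₁ * q₂ * r₃ + p₁ * r₂ * q₃ + q₁ * p₂ * r₃ + q₁ * r₂ * p₃ + r₁ * p₂ * q₃ + r₁ * q₂ * p₃

/-- A linear form which is at least `m` at the vertices of the simplex `p, q, r ≤ 1`,
`p + q + r ≥ 2.41` is at least `m` on the simplex. -/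
lemma linear_ge_of_vertices {a b c m p q r : ℝ} (hp : p ≤ 1) (hq : q ≤ 1) (hr : r ≤ 1)
    (hs : 2.41 ≤ p + q + r) (h0 : m ≤ a * 1 + b * 1 + c * 1) (h1 : m ≤ a * 0.41 + b * 1 + c * 1)
    (h2 : m ≤ a * 1 + b * 0.41 + c * 1) (h3 : m ≤ a * 1 + b * 1 + c * 0.41) :
    m ≤ a * p + b * q + c * r := by
  have e0 := mul_nonneg (sub_nonneg.2 hs) (sub_nonneg.2 h0)
  have e1 := mul_nonneg (sub_nonneg.2 hp) (sub_nonneg.2 h1)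
  have e2 := mul_nonneg (sub_nonneg.2 hq) (sub_nonneg.2 h2)
  have e3 := mul_nonneg (sub_nonneg.2 hr) (sub_nonneg.2 h3)
  linarith

lemma triDet_ge_row₁ {p₁ q₁ r₁ p₂ q₂ r₂ p₃ q₃ r₃ : ℝ} (hp : p₁ ≤ 1) (hq : q₁ ≤ 1) (hr : r₁ ≤ 1)
    (hs : 2.41 ≤ p₁ + q₁ + r₁) (h0 : 1 ≤ triDet 1 1 1 p₂ q₂ r₂ p₃ q₃ r₃)
    (h1 : 1 ≤ triDet 0.41 1 1 p₂ q₂ r₂ p₃ q₃ r₃) (h2 : 1 ≤ triDet 1 0.41 1 p₂ q₂ r₂ p₃ q₃ r₃)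
    (h3 : 1 ≤ triDet 1 1 0.41 p₂ q₂ r₂ p₃ q₃ r₃) :
    1 ≤ triDet p₁ q₁ r₁ p₂ q₂ r₂ p₃ q₃ r₃ := by
  unfold triDet at *
  linarith [linear_ge_of_vertices (a := -q₂ * r₃ + r₂ * q₃) (b := p₂ * r₃ + r₂ * p₃)
    (c := p₂ * q₃ + q₂ * p₃) (m := 1) hp hq hr hs (by linarith) (by linarith) (by linarith)
    (by linarith)]

lemma triDet_ge_row₂ {p₁ q₁ r₁ p₂ q₂ r₂ p₃ q₃ r₃ : ℝ} (hp : p₂ ≤ 1) (hq : q₂ ≤ 1) (hr : r₂ ≤ 1)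
    (hs : 2.41 ≤ p₂ + q₂ + r₂) (h0 : 1 ≤ triDet p₁ q₁ r₁ 1 1 1 p₃ q₃ r₃)
    (h1 : 1 ≤ triDet p₁ q₁ r₁ 0.41 1 1 p₃ q₃ r₃) (h2 : 1 ≤ triDet p₁ q₁ r₁ 1 0.41 1 p₃ q₃ r₃)
    (h3 : 1 ≤ triDet p₁ q₁ r₁ 1 1 0.41 p₃ q₃ r₃) :
    1 ≤ triDet p₁ q₁ r₁ p₂ q₂ r₂ p₃ q₃ r₃ := by
  unfold triDet at *
  linarith [linear_ge_of_vertices (a := q₁ * r₃ + r₁ * q₃) (b := -p₁ * r₃ + r₁ * p₃)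
    (c := p₁ * q₃ + q₁ * p₃) (m := 1) hp hq hr hs (by linarith) (by linarith) (by linarith)
    (by linarith)]

lemma triDet_ge_row₃ {p₁ q₁ r₁ p₂ q₂ r₂ p₃ q₃ r₃ : ℝ} (hp : p₃ ≤ 1) (hq : q₃ ≤ 1) (hr : r₃ ≤ 1)
    (hs : 2.41 ≤ p₃ + q₃ + r₃) (h0 : 1 ≤ triDet p₁ q₁ r₁ p₂ q₂ r₂ 1 1 1)
    (h1 : 1 ≤ triDet p₁ q₁ r₁ p₂ q₂ r₂ 0.41 1 1) (h2 : 1 ≤ triDet p₁ q₁ r₁ p₂ q₂ r₂ 1 0.41 1)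
    (h3 : 1 ≤ triDet p₁ q₁ r₁ p₂ q₂ r₂ 1 1 0.41) :
    1 ≤ triDet p₁ q₁ r₁ p₂ q₂ r₂ p₃ q₃ r₃ := by
  unfold triDet at *
  linarith [linear_ge_of_vertices (a := q₁ * r₂ + r₁ * q₂) (b := p₁ * r₂ + r₁ * p₂)
    (c := -p₁ * q₂ + q₁ * p₂) (m := 1) hp hq hr hs (by linarith) (by linarith) (by linarith)
    (by linarith)]

/-- The determinant is linear in each of the three points, so it is enough to look at the vertices
of the three simplices. -/
lemma one_le_triDet {p₁ q₁ r₁ p₂ q₂ r₂ p₃ q₃ r₃ : ℝ} (hp₁ : p₁ ≤ 1) (hq₁ : q₁ ≤ 1) (hr₁ : r₁ ≤ 1)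
    (hp₂ : p₂ ≤ 1) (hq₂ : q₂ ≤ 1) (hr₂ : r₂ ≤ 1) (hp₃ : p₃ ≤ 1) (hq₃ : q₃ ≤ 1) (hr₃ : r₃ ≤ 1)
    (h₁ : 2.41 ≤ p₁ + q₁ + r₁) (h₂ : 2.41 ≤ p₂ + q₂ + r₂) (h₃ : 2.41 ≤ p₃ + q₃ + r₃) :
    1 ≤ triDet p₁ q₁ r₁ p₂ q₂ r₂ p₃ q₃ r₃ := by
  apply triDet_ge_row₁ hp₁ hq₁ hr₁ h₁ <;> apply triDet_ge_row₂ hp₂ hq₂ hr₂ h₂ <;>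
    apply triDet_ge_row₃ hp₃ hq₃ hr₃ h₃ <;> norm_num [triDet]

lemma triDet_le_four {p₁ q₁ r₁ p₂ q₂ r₂ p₃ q₃ r₃ : ℝ} (hp₁ : p₁ ≤ 1) (hq₁ : q₁ ≤ 1) (hr₁ : r₁ ≤ 1)
    (hp₂ : p₂ ≤ 1) (hq₂ : q₂ ≤ 1) (hr₂ : r₂ ≤ 1) (hp₃ : p₃ ≤ 1) (hq₃ : q₃ ≤ 1) (hr₃ : r₃ ≤ 1)
    (gp₁ : 0 ≤ p₁) (gq₁ : 0 ≤ q₁) (gr₁ : 0 ≤ r₁) (gp₂ : 0 ≤ p₂) (gq₂ : 0 ≤ q₂) (gr₂ : 0 ≤ r₂)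
    (gp₃ : 0 ≤ p₃) (gq₃ : 0 ≤ q₃) (gr₃ : 0 ≤ r₃) :
    triDet p₁ q₁ r₁ p₂ q₂ r₂ p₃ q₃ r₃ ≤ 4 := by
  have key : ∀ x y z : ℝ, 0 ≤ x → x ≤ 1 → 0 ≤ y → y ≤ 1 → 0 ≤ z → x * y * z ≤ z := by
    intro x y z hx hx' hy hy' hz
    exact mul_le_of_le_one_left hz (mul_le_one₀ hx' hy hy')
  have e1 := key q₁ p₂ r₃ gq₁ hq₁ gp₂ hp₂ gr₃
  have e2 := key q₁ p₃ r₂ gq₁ hq₁ gp₃ hp₃ gr₂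
  have e3 := key r₁ p₂ q₃ gr₁ hr₁ gp₂ hp₂ gq₃
  have e4 := key r₁ p₃ q₂ gr₁ hr₁ gp₃ hp₃ gq₂
  have e5 : q₂ + r₃ - q₂ * r₃ ≤ 1 := by nlinarith
  have e6 : r₂ * q₃ ≤ 1 := mul_le_one₀ hr₂ gq₃ hq₃
  unfold triDet
  rcases le_total 0 (r₂ * q₃ - q₂ * r₃) with h | h
  · have := mul_le_of_le_one_left h hp₁
    linarith
  · have := mul_nonpos_of_nonneg_of_nonpos gp₁ h
    linarith

open scoped Pointwise in
/-- A crude lower bound for the determinant, by comparing volumes. -/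
lemma det_gt_of_adm {A : Matrix (Fin 3) (Fin 3) ℝ} (hdet : A.det ≠ 0) (hA : Adm A) :
    0.8 < |A.det| := by
  have hs := sqrt_two_bounds
  have hsm : MeasurableSet ((0.49 : ℝ) • truncCube) :=
    measurableSet_truncCube.const_smul₀ _
  have h := volume_le_det hdet hsm (by
    rintro z hz _ ⟨x, hx, rfl⟩ _ ⟨y, hy, rfl⟩ hxy
    apply hz
    have e : ∀ i, |latPt A z i| ≤ 0.49 * |x i| + 0.49 * |y i| := by
      intro i
      have := congrFun hxy i
      simp only [Pi.add_apply, Pi.smul_apply, smul_eq_mul] at this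
      have e : latPt A z i = 0.49 * y i - 0.49 * x i := by linarith
      rw [e]
      refine (abs_sub _ _).trans ?_
      rw [abs_mul, abs_mul, abs_of_pos (show (0 : ℝ) < 0.49 by norm_num)]
      linarith
    have e0 := e 0
    have e1 := e 1
    have e2 := e 2
    obtain ⟨hx, hx'⟩ := hx
    obtain ⟨hy, hy'⟩ := hy
    have := hx 0
    have := hx 1
    have := hx 2
    have := hy 0
    have := hy 1
    have := hy 2
    apply adm_of_lt hA <;> linarith)
  rw [Measure.addHaar_smul, volume_truncCube, ← ENNReal.ofReal_mul (abs_nonneg _),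
    ENNReal.ofReal_le_ofReal_iff (abs_nonneg _)] at h
  simp only [Module.finrank_fintype_fun_eq_card, Fintype.card_fin] at h
  rw [abs_of_pos (by norm_num)] at h
  norm_num at h ⊢
  linarith

/-- If a prime `p` divides the determinant of an integer matrix, some nonzero combination of the
columns, with coefficients minimal in absolute value modulo `p`, is divisible by `p`. -/
lemma exists_combination_of_dvd_det (p : ℕ) [Fact p.Prime] (Z : Matrix (Fin 3) (Fin 3) ℤ)
    (h : (p : ℤ) ∣ Z.det) : ∃ k w : Fin 3 → ℤ, k ≠ 0 ∧ Z.mulVec k = (p : ℤ) • w ∧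
      ∀ i, -(p : ℤ) < k i * 2 ∧ k i * 2 ≤ p := by
  have h0 : (Z.map (Int.castRingHom (ZMod p))).det = 0 := by
    have := (Int.castRingHom (ZMod p)).map_det Z
    rw [RingHom.mapMatrix_apply] at this
    rw [← this]
    simpa using (ZMod.intCast_zmod_eq_zero_iff_dvd Z.det p).2 h
  obtain ⟨u, hu, hu0⟩ := Matrix.exists_mulVec_eq_zero_iff.2 h0
  have hdiv : ∀ i, (p : ℤ) ∣ Z.mulVec (fun j => (u j).valMinAbs) i := by
    intro i
    rw [← ZMod.intCast_zmod_eq_zero_iff_dvd]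
    have := congrFun hu0 i
    simpa [Matrix.mulVec, dotProduct] using this
  choose w hw using hdiv
  refine ⟨fun j => (u j).valMinAbs, w, ?_, ?_, fun i => (u i).valMinAbs_mem_Ioc⟩
  · intro hk
    apply hu
    ext j
    have := congrFun hk j
    simpa using this
  · ext i
    simpa using hw i

/-- A combination of three numbers in `(0.414, 1)` with coefficients in `{-1, 0, 1}` is less than
`2` in absolute value unless the coefficients are all `1` or all `-1`. -/
lemma signed_sum_bound {u v w : ℝ} (hu : u < 1) (hv : v < 1) (hw : w < 1) (gu : 0.414 < u)
    (gv : 0.414 < v) (gw : 0.414 < w) {a b c : ℤ} (ha : a = -1 ∨ a = 0 ∨ a = 1)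
    (hb : b = -1 ∨ b = 0 ∨ b = 1) (hc : c = -1 ∨ c = 0 ∨ c = 1) :
    |u * a + v * b + w * c| < 2 ∨
      (a = b ∧ b = c ∧ a ≠ 0) ∧ |u * a + v * b + w * c| < 3 := by
  rw [abs_lt, abs_lt]
  rcases ha with rfl | rfl | rfl <;> rcases hb with rfl | rfl | rfl <;>
    rcases hc with rfl | rfl | rfl <;> push_cast <;>
    first
      | exact Or.inl ⟨by linarith, by linarith⟩
      | exact Or.inr ⟨by decide, by linarith, by linarith⟩

/-- A third of a combination of the three corner points with coefficients in `{-1, 0, 1}` is in the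
open truncated cube. -/
lemma small_combination_three {p₁ q₁ r₁ p₂ q₂ r₂ p₃ q₃ r₃ : ℝ} (hp₁ : p₁ < 1) (hq₁ : q₁ < 1)
    (hr₁ : r₁ < 1) (hp₂ : p₂ < 1) (hq₂ : q₂ < 1) (hr₂ : r₂ < 1) (hp₃ : p₃ < 1) (hq₃ : q₃ < 1)
    (hr₃ : r₃ < 1) (gp₁ : 0.414 < p₁) (gq₁ : 0.414 < q₁) (gr₁ : 0.414 < r₁) (gp₂ : 0.414 < p₂)
    (gq₂ : 0.414 < q₂) (gr₂ : 0.414 < r₂) (gp₃ : 0.414 < p₃) (gq₃ : 0.414 < q₃)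
    (gr₃ : 0.414 < r₃) {a b c : ℤ} (ha : a = -1 ∨ a = 0 ∨ a = 1)
    (hb : b = -1 ∨ b = 0 ∨ b = 1) (hc : c = -1 ∨ c = 0 ∨ c = 1) {x y z : ℝ}
    (hx : 3 * x = -p₁ * a + p₂ * b + p₃ * c) (hy : 3 * y = q₁ * a - q₂ * b + q₃ * c)
    (hz : 3 * z = r₁ * a + r₂ * b - r₃ * c) :
    |x| < 1 ∧ |y| < 1 ∧ |z| < 1 ∧ |x| + |y| + |z| < 2.414 := by
  have e1 := signed_sum_bound hp₁ hp₂ hp₃ gp₁ gp₂ gp₃ (a := -a) (by omega) hb hc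
  have e2 := signed_sum_bound hq₁ hq₂ hq₃ gq₁ gq₂ gq₃ ha (b := -b) (by omega) hc
  have e3 := signed_sum_bound hr₁ hr₂ hr₃ gr₁ gr₂ gr₃ ha hb (c := -c) (by omega)
  have f1 : p₁ * ((-a : ℤ) : ℝ) + p₂ * b + p₃ * c = 3 * x := by rw [hx]; push_cast; ring
  have f2 : q₁ * (a : ℝ) + q₂ * ((-b : ℤ) : ℝ) + q₃ * c = 3 * y := by rw [hy]; push_cast; ring
  have f3 : r₁ * (a : ℝ) + r₂ * b + r₃ * ((-c : ℤ) : ℝ) = 3 * z := by rw [hz]; push_cast; ring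
  rw [f1, abs_mul, abs_of_pos three_pos] at e1
  rw [f2, abs_mul, abs_of_pos three_pos] at e2
  rw [f3, abs_mul, abs_of_pos three_pos] at e3
  clear f1 f2 f3 hx hy hz ha hb hc
  -- The signs cannot agree in two of the three coordinates.
  rcases e1 with e1 | ⟨g1, e1⟩ <;> rcases e2 with e2 | ⟨g2, e2⟩ <;> rcases e3 with e3 | ⟨g3, e3⟩ <;>
    first
      | (exfalso; omega)
      | exact ⟨by linarith, by linarith, by linarith, by linarith⟩

/-- Half of a subsum of three corner points is in the open truncated cube. -/
lemma small_combination_two {p₁ q₁ r₁ p₂ q₂ r₂ p₃ q₃ r₃ : ℝ} (hp₁ : p₁ < 1) (hq₁ : q₁ < 1)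
    (hr₁ : r₁ < 1) (hp₂ : p₂ < 1) (hq₂ : q₂ < 1) (hr₂ : r₂ < 1) (hp₃ : p₃ < 1) (hq₃ : q₃ < 1)
    (hr₃ : r₃ < 1) (gp₁ : 0.414 < p₁) (gq₁ : 0.414 < q₁) (gr₁ : 0.414 < r₁) (gp₂ : 0.414 < p₂)
    (gq₂ : 0.414 < q₂) (gr₂ : 0.414 < r₂) (gp₃ : 0.414 < p₃) (gq₃ : 0.414 < q₃)
    (gr₃ : 0.414 < r₃) {a b c : ℤ} (ha : a = 0 ∨ a = 1) (hb : b = 0 ∨ b = 1)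
    (hc : c = 0 ∨ c = 1) {x y z : ℝ}
    (hx : 2 * x = -p₁ * a + p₂ * b + p₃ * c) (hy : 2 * y = q₁ * a - q₂ * b + q₃ * c)
    (hz : 2 * z = r₁ * a + r₂ * b - r₃ * c) :
    |x| < 1 ∧ |y| < 1 ∧ |z| < 1 ∧ |x| + |y| + |z| < 2.414 := by
  -- Bounds for a coordinate in which the points `u, v` are positive and `w` is negative.
  have key : ∀ {u v w t : ℝ} {a b c : ℤ}, u < 1 → v < 1 → w < 1 → 0.414 < u → 0.414 < v →
      0.414 < w → (a = 0 ∨ a = 1) → (b = 0 ∨ b = 1) → (c = 0 ∨ c = 1) →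
      2 * t = u * a + v * b - w * c →
      |t| < 1 ∧ ((a = 0 ∨ b = 0 ∨ c = 1) → |t| < 0.8) ∧ ((a = 0 ∨ b = 0) → |t| < 0.5) := by
    intro u v w t a b c _ _ _ _ _ _ ha hb hc ht
    rw [abs_lt, abs_lt, abs_lt]
    rcases ha with rfl | rfl <;> rcases hb with rfl | rfl <;> rcases hc with rfl | rfl <;>
      push_cast at ht <;> norm_num <;> constructor <;> (try constructor) <;> (try constructor) <;>
      linarith
  obtain ⟨x1, x2, x3⟩ := key hp₂ hp₃ hp₁ gp₂ gp₃ gp₁ hb hc ha (t := x) (by rw [hx]; ring)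
  obtain ⟨y1, y2, y3⟩ := key hq₁ hq₃ hq₂ gq₁ gq₃ gq₂ ha hc hb (t := y) (by rw [hy]; ring)
  obtain ⟨z1, z2, z3⟩ := key hr₁ hr₂ hr₃ gr₁ gr₂ gr₃ ha hb hc (t := z) (by rw [hz])
  refine ⟨x1, y1, z1, ?_⟩
  clear hx hy hz
  rcases ha with rfl | rfl <;> rcases hb with rfl | rfl <;> rcases hc with rfl | rfl <;>
    norm_num at x2 x3 y2 y3 z2 z3 ⊢ <;> linarith

lemma det_bound_of_three_pairs {A : Matrix (Fin 3) (Fin 3) ℝ} (hdet : A.det ≠ 0) (hA : Adm A)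
    {z₁ z₂ z₃ : Fin 3 → ℤ} (hz₁ : z₁ ∈ cornerPts A) (hz₂ : z₂ ∈ cornerPts A)
    (hz₃ : z₃ ∈ cornerPts A)
    (h₁ : latPt A z₁ 0 < 0 ∧ 0 < latPt A z₁ 1 ∧ 0 < latPt A z₁ 2)
    (h₂ : 0 < latPt A z₂ 0 ∧ latPt A z₂ 1 < 0 ∧ 0 < latPt A z₂ 2)
    (h₃ : 0 < latPt A z₃ 0 ∧ 0 < latPt A z₃ 1 ∧ latPt A z₃ 2 < 0) : 1 ≤ |A.det| := by
  set Z : Matrix (Fin 3) (Fin 3) ℤ := Matrix.of fun i j => (![z₁, z₂, z₃] j) i with hZ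
  have hprod : (A * Z.map (Int.castRingHom ℝ)).det = A.det * (Z.det : ℝ) := by
    rw [Matrix.det_mul]
    congr 1
    simpa using ((Int.castRingHom ℝ).map_det Z).symm
  have hcol : ∀ i j, (A * Z.map (Int.castRingHom ℝ)) i j = latPt A (![z₁, z₂, z₃] j) i := by
    intro i j
    simp [Matrix.mul_apply, latPt, Matrix.mulVec, dotProduct, hZ]
  have hD : (A * Z.map (Int.castRingHom ℝ)).det = triDet (-latPt A z₁ 0) (latPt A z₁ 1)
      (latPt A z₁ 2) (latPt A z₂ 0) (-latPt A z₂ 1) (latPt A z₂ 2) (latPt A z₃ 0) (latPt A z₃ 1)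
      (-latPt A z₃ 2) := by
    rw [Matrix.det_fin_three]
    simp only [hcol, triDet]
    simp
    ring
  -- A combination `k` of the three points divisible by `m` gives the lattice point `A w`.
  have hcomb : ∀ (m : ℕ) (k w : Fin 3 → ℤ), Z.mulVec k = (m : ℤ) • w → ∀ i,
      m * latPt A w i = latPt A z₁ i * k 0 + latPt A z₂ i * k 1 + latPt A z₃ i * k 2 := by
    intro m k w h i
    have hw : (fun j => ((m : ℝ) * (w j : ℝ))) =
        (Z.map (Int.castRingHom ℝ)).mulVec fun j => (k j : ℝ) := by
      ext j
      have := congrFun h j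
      have := congrArg (Int.cast : ℤ → ℝ) this
      simp [Matrix.mulVec, dotProduct] at this ⊢
      exact this.symm
    have e : (m : ℝ) * latPt A w i = (A.mulVec fun j => ((m : ℝ) * (w j : ℝ))) i := by
      simp only [latPt, Matrix.mulVec, dotProduct, Finset.mul_sum]
      exact Finset.sum_congr rfl fun _ _ => by ring
    rw [e, hw, Matrix.mulVec_mulVec]
    simp only [Matrix.mulVec, dotProduct, hcol, Fin.sum_univ_three]
    simp
  have s2 := sqrt_two_bounds.1
  have t₁ := adm_corner hA hz₁
  have t₂ := adm_corner hA hz₂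
  have t₃ := adm_corner hA hz₃
  have a₁ := corner_abs_gt hA hz₁
  have a₂ := corner_abs_gt hA hz₂
  have a₃ := corner_abs_gt hA hz₃
  have b₁ := hz₁.2
  have b₂ := hz₂.2
  have b₃ := hz₃.2
  simp only [Fin.forall_fin_succ, Fin.succ_zero_eq_one, Fin.succ_one_eq_two, IsEmpty.forall_iff,
    and_true] at a₁ a₂ a₃ b₁ b₂ b₃
  rw [abs_of_neg h₁.1, abs_of_pos h₁.2.1, abs_of_pos h₁.2.2] at t₁ a₁ b₁
  rw [abs_of_pos h₂.1, abs_of_neg h₂.2.1, abs_of_pos h₂.2.2] at t₂ a₂ b₂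
  rw [abs_of_pos h₃.1, abs_of_pos h₃.2.1, abs_of_neg h₃.2.2] at t₃ a₃ b₃
  obtain ⟨a₁0, a₁1, a₁2⟩ := a₁
  obtain ⟨a₂0, a₂1, a₂2⟩ := a₂
  obtain ⟨a₃0, a₃1, a₃2⟩ := a₃
  obtain ⟨b₁0, b₁1, b₁2⟩ := b₁
  obtain ⟨b₂0, b₂1, b₂2⟩ := b₂
  obtain ⟨b₃0, b₃1, b₃2⟩ := b₃
  have hD1 := one_le_triDet b₁0.le b₁1.le b₁2.le b₂0.le b₂1.le b₂2.le b₃0.le b₃1.le b₃2.le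
    (by linarith) (by linarith) (by linarith)
  have hD4 := triDet_le_four b₁0.le b₁1.le b₁2.le b₂0.le b₂1.le b₂2.le b₃0.le b₃1.le b₃2.le
    (by linarith) (by linarith) (by linarith) (by linarith) (by linarith) (by linarith)
    (by linarith) (by linarith) (by linarith)
  rw [← hD, hprod] at hD1 hD4
  /- The three points generate a sublattice of index `|det Z|`, which is less than `5` and not
  divisible by `2` or `3`. -/
  have hZ0 : Z.det ≠ 0 := by
    intro h
    rw [h] at hD1
    norm_num at hD1
  have hnd : ∀ m : ℕ, m = 2 ∨ m = 3 → ¬ (m : ℤ) ∣ Z.det := by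
    intro m hm hdvd
    have : Fact m.Prime := ⟨by rcases hm with rfl | rfl <;> norm_num⟩
    obtain ⟨k, w, hk0, hkw, hk⟩ := exists_combination_of_dvd_det m Z hdvd
    have hc := hcomb m k w hkw
    have hw0 : w = 0 := by
      have hk0 := hk 0
      have hk1 := hk 1
      have hk2 := hk 2
      have hc0 := hc 0
      have hc1 := hc 1
      have hc2 := hc 2
      rcases hm with rfl | rfl
      · push_cast at hk0 hk1 hk2 hc0 hc1 hc2
        obtain ⟨e0, e1, e2, e3⟩ := small_combination_two b₁0 b₁1 b₁2 b₂0 b₂1 b₂2 b₃0 b₃1 b₃2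
          a₁0 a₁1 a₁2 a₂0 a₂1 a₂2 a₃0 a₃1 a₃2 (a := k 0) (b := k 1) (c := k 2) (by omega)
          (by omega) (by omega) (x := latPt A w 0) (y := latPt A w 1)
          (z := latPt A w 2) (by rw [hc0]; ring) (by rw [hc1]; ring) (by rw [hc2]; ring)
        exact adm_of_lt hA e0 e1 e2 e3
      · push_cast at hk0 hk1 hk2 hc0 hc1 hc2
        obtain ⟨e0, e1, e2, e3⟩ := small_combination_three b₁0 b₁1 b₁2 b₂0 b₂1 b₂2 b₃0 b₃1 b₃2
          a₁0 a₁1 a₁2 a₂0 a₂1 a₂2 a₃0 a₃1 a₃2 (a := k 0) (b := k 1) (c := k 2) (by omega)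
          (by omega) (by omega) (x := latPt A w 0) (y := latPt A w 1)
          (z := latPt A w 2) (by rw [hc0]; ring) (by rw [hc1]; ring) (by rw [hc2]; ring)
        exact adm_of_lt hA e0 e1 e2 e3
    rw [hw0, smul_zero] at hkw
    exact hk0 (Matrix.eq_zero_of_mulVec_eq_zero hZ0 hkw)
  have hlow := det_gt_of_adm hdet hA
  have habs : |A.det| * |(Z.det : ℝ)| ≤ 4 := by
    rw [← abs_mul, abs_of_pos (by linarith)]
    exact hD4
  have hZ5 : |Z.det| < 5 := by
    by_contra hc
    have : (5 : ℝ) ≤ |(Z.det : ℝ)| := by exact_mod_cast not_lt.1 hc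
    have h5 : |A.det| * 5 ≤ |A.det| * |(Z.det : ℝ)| :=
      mul_le_mul_of_nonneg_left this (abs_nonneg _)
    linarith only [h5, hlow, habs]
  have n2 := hnd 2 (Or.inl rfl)
  have n3 := hnd 3 (Or.inr rfl)
  have hunit : |Z.det| = 1 := by
    rw [abs_lt] at hZ5
    push_cast at n2 n3
    have : Z.det = 1 ∨ Z.det = -1 := by omega
    rcases this with h | h <;> rw [h] <;> rfl
  have hunit' : |(Z.det : ℝ)| = 1 := by exact_mod_cast hunit
  have := hD1.trans (le_abs_self _)
  rwa [abs_mul, hunit', mul_one] at this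

/-! ### The determinant bound -/

lemma latPt_ne_zero_of_corner {A : Matrix (Fin 3) (Fin 3) ℝ} (hA : Adm A) {z : Fin 3 → ℤ}
    (hz : z ∈ cornerPts A) (i : Fin 3) : latPt A z i ≠ 0 := by
  intro h
  have := corner_abs_gt hA hz i
  rw [h, abs_zero] at this
  norm_num at this

lemma neg_pos_of_latPt_neg {A : Matrix (Fin 3) (Fin 3) ℝ} {z : Fin 3 → ℤ} {i : Fin 3}
    (h : latPt A z i < 0) : 0 < latPt A (-z) i := by
  rw [latPt_neg, Pi.neg_apply]; linarith

lemma neg_neg_of_latPt_pos {A : Matrix (Fin 3) (Fin 3) ℝ} {z : Fin 3 → ℤ} {i : Fin 3}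
    (h : 0 < latPt A z i) : latPt A (-z) i < 0 := by
  rw [latPt_neg, Pi.neg_apply]; linarith

/-- Reflecting coordinates brings any third pair of corner points into the position required by
`det_bound_of_three_pairs`. -/
lemma det_bound_of_third_point {A : Matrix (Fin 3) (Fin 3) ℝ} (hdet : A.det ≠ 0) (hA : Adm A)
    {z₁ z₂ z₃ : Fin 3 → ℤ} (hz₁ : z₁ ∈ cornerPts A) (hz₂ : z₂ ∈ cornerPts A)
    (hz₃ : z₃ ∈ cornerPts A) (hpos : ∀ i, 0 < latPt A z₁ i) (hq0 : 0 < latPt A z₂ 0)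
    (hq1 : 0 < latPt A z₂ 1) (hq2 : latPt A z₂ 2 < 0) (h0 : 0 < latPt A z₃ 0)
    (h₁ : z₃ ≠ z₁) (h₂ : z₃ ≠ z₂) : 1 - α ^ 3 ≤ |A.det| := by
  have p0 := hpos 0
  have p1 := hpos 1
  have p2 := hpos 2
  have hα := alpha_cube_bounds.1
  suffices h : 1 ≤ |A.det| by linarith
  have main : ∀ s : Fin 3 → ℝ, (∀ i, |s i| = 1) → ∀ w₁ w₂ w₃ : Fin 3 → ℤ, w₁ ∈ cornerPts A →
      w₂ ∈ cornerPts A → w₃ ∈ cornerPts A →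
      (s 0 * latPt A w₁ 0 < 0 ∧ 0 < s 1 * latPt A w₁ 1 ∧ 0 < s 2 * latPt A w₁ 2) →
      (0 < s 0 * latPt A w₂ 0 ∧ s 1 * latPt A w₂ 1 < 0 ∧ 0 < s 2 * latPt A w₂ 2) →
      (0 < s 0 * latPt A w₃ 0 ∧ 0 < s 1 * latPt A w₃ 1 ∧ s 2 * latPt A w₃ 2 < 0) →
      1 ≤ |A.det| := by
    intro s hs w₁ w₂ w₃ c₁ c₂ c₃ e₁ e₂ e₃
    rw [← abs_det_diagonal_mul A hs]
    rw [← cornerPts_diagonal_mul hs] at c₁ c₂ c₃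
    simp only [← latPt_diagonal_mul] at e₁ e₂ e₃
    refine det_bound_of_three_pairs ?_ (adm_diagonal_mul hA hs) c₁ c₂ c₃ e₁ e₂ e₃
    rw [← abs_ne_zero, abs_det_diagonal_mul A hs, abs_ne_zero]
    exact hdet
  rcases lt_or_gt_of_ne (latPt_ne_zero_of_corner hA hz₃ 1) with h1 | h1 <;>
    rcases lt_or_gt_of_ne (latPt_ne_zero_of_corner hA hz₃ 2) with h2 | h2
  · have g0 := neg_neg_of_latPt_pos hq0
    have g1 := neg_neg_of_latPt_pos hq1
    have g2 := neg_pos_of_latPt_neg hq2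
    refine main ![1, -1, 1] (by simp [Fin.forall_fin_succ]) (-z₂) z₁ z₃ (cornerPts_neg hz₂) hz₁ hz₃
      ?_ ?_ ?_ <;> simp <;> refine ⟨?_, ?_, ?_⟩ <;> linarith
  · have g0 := neg_neg_of_latPt_pos p0
    have g1 := neg_neg_of_latPt_pos p1
    have g2 := neg_neg_of_latPt_pos p2
    refine main ![1, -1, -1] (by simp [Fin.forall_fin_succ]) (-z₁) z₂ z₃ (cornerPts_neg hz₁) hz₂ hz₃
      ?_ ?_ ?_ <;> simp <;> refine ⟨?_, ?_, ?_⟩ <;> linarith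
  · refine absurd (corner_unique hA hz₃ hz₂ ?_) h₂
    simp [Fin.forall_fin_succ, h0, h1, hq0, hq1, h2.not_gt, hq2.not_gt]
  · refine absurd (corner_unique hA hz₃ hz₁ ?_) h₁
    simp [Fin.forall_fin_succ, h0, h1, h2, p0, p1, p2]

lemma det_bound_of_second_point {A : Matrix (Fin 3) (Fin 3) ℝ} (hdet : A.det ≠ 0) (hA : Adm A)
    {z₁ z₂ : Fin 3 → ℤ} (hz₁ : z₁ ∈ cornerPts A) (hz₂ : z₂ ∈ cornerPts A)
    (hpos : ∀ i, 0 < latPt A z₁ i) (hq0 : 0 < latPt A z₂ 0)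
    (hq1 : 0 < latPt A z₂ 1) (hq2 : latPt A z₂ 2 < 0) : 1 - α ^ 3 ≤ |A.det| := by
  by_cases hT : ∀ z ∈ cornerPts A, z = z₁ ∨ z = -z₁ ∨ z = z₂ ∨ z = -z₂
  · exact det_bound_of_two_pairs hdet hA hz₁ hz₂ hpos hq0 hq1 hq2 hT
  push Not at hT
  obtain ⟨z₃, hz₃, n1, n2, n3, n4⟩ := hT
  rcases lt_or_gt_of_ne (latPt_ne_zero_of_corner hA hz₃ 0) with h0 | h0
  · exact det_bound_of_third_point hdet hA hz₁ hz₂ (cornerPts_neg hz₃) hpos hq0 hq1 hq2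
      (neg_pos_of_latPt_neg h0) (fun h => n2 (by rw [← h, neg_neg]))
      (fun h => n4 (by rw [← h, neg_neg]))
  · exact det_bound_of_third_point hdet hA hz₁ hz₂ hz₃ hpos hq0 hq1 hq2 h0 n1 n3

/-- Permuting coordinates, the single negative coordinate of the second point becomes the last
one. -/
lemma det_bound_of_second_point' {A : Matrix (Fin 3) (Fin 3) ℝ} (hdet : A.det ≠ 0) (hA : Adm A)
    {z₁ z₂ : Fin 3 → ℤ} (hz₁ : z₁ ∈ cornerPts A) (hz₂ : z₂ ∈ cornerPts A)
    (hpos : ∀ i, 0 < latPt A z₁ i) (j : Fin 3) (hj : latPt A z₂ j < 0)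
    (hq : ∀ i, i ≠ j → 0 < latPt A z₂ i) : 1 - α ^ 3 ≤ |A.det| := by
  set σ : Equiv.Perm (Fin 3) := Equiv.swap j 2 with hσ
  have hne : ∀ i, i ≠ 2 → σ i ≠ j := by
    intro i hi h
    apply hi
    rw [← σ.injective.eq_iff, h, hσ, Equiv.swap_apply_right]
  rw [← abs_det_submatrix A σ]
  refine det_bound_of_second_point (z₁ := z₁) (z₂ := z₂) ?_ (adm_submatrix hA σ) ?_ ?_ ?_ ?_ ?_ ?_
  · rw [← abs_ne_zero, abs_det_submatrix, abs_ne_zero]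
    exact hdet
  · rwa [cornerPts_submatrix]
  · rwa [cornerPts_submatrix]
  · intro i
    rw [latPt_submatrix]
    exact hpos _
  · rw [latPt_submatrix]
    exact hq _ (hne 0 (by decide))
  · rw [latPt_submatrix]
    exact hq _ (hne 1 (by decide))
  · rw [latPt_submatrix, hσ, Equiv.swap_apply_right]
    exact hj

lemma det_bound_of_first_point {A : Matrix (Fin 3) (Fin 3) ℝ} (hdet : A.det ≠ 0) (hA : Adm A)
    {z₁ : Fin 3 → ℤ} (hz₁ : z₁ ∈ cornerPts A) (hpos : ∀ i, 0 < latPt A z₁ i) :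
    1 - α ^ 3 ≤ |A.det| := by
  by_cases hT : ∀ z ∈ cornerPts A, z = z₁ ∨ z = -z₁
  · exact det_bound_of_one_pair hdet hA hz₁ hpos hT
  push Not at hT
  obtain ⟨z₂, hz₂, n1, n2⟩ := hT
  have p0 := hpos 0
  have p1 := hpos 1
  have p2 := hpos 2
  have hz₂' := cornerPts_neg hz₂
  have n2' : -z₂ ≠ z₁ := fun h => n2 (by rw [← h, neg_neg])
  rcases lt_or_gt_of_ne (latPt_ne_zero_of_corner hA hz₂ 0) with h0 | h0 <;>
    rcases lt_or_gt_of_ne (latPt_ne_zero_of_corner hA hz₂ 1) with h1 | h1 <;>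
    rcases lt_or_gt_of_ne (latPt_ne_zero_of_corner hA hz₂ 2) with h2 | h2
  · refine absurd (corner_unique hA hz₂' hz₁ ?_) n2'
    simp [Fin.forall_fin_succ, latPt_neg, h0, h1, h2, p0, p1, p2]
  · refine det_bound_of_second_point' hdet hA hz₁ hz₂' hpos 2 (neg_neg_of_latPt_pos h2) ?_
    simp [Fin.forall_fin_succ, latPt_neg, h0, h1]
  · refine det_bound_of_second_point' hdet hA hz₁ hz₂' hpos 1 (neg_neg_of_latPt_pos h1) ?_
    simp [Fin.forall_fin_succ, latPt_neg, h0, h2]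
  · refine det_bound_of_second_point' hdet hA hz₁ hz₂ hpos 0 h0 ?_
    simp [Fin.forall_fin_succ, h1, h2]
  · refine det_bound_of_second_point' hdet hA hz₁ hz₂' hpos 0 (neg_neg_of_latPt_pos h0) ?_
    simp [Fin.forall_fin_succ, latPt_neg, h1, h2]
  · refine det_bound_of_second_point' hdet hA hz₁ hz₂ hpos 1 h1 ?_
    simp [Fin.forall_fin_succ, h0, h2]
  · refine det_bound_of_second_point' hdet hA hz₁ hz₂ hpos 2 h2 ?_
    simp [Fin.forall_fin_succ, h0, h1]
  · refine absurd (corner_unique hA hz₂ hz₁ ?_) n1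
    simp [Fin.forall_fin_succ, h0, h1, h2, p0, p1, p2]

/-- Every admissible lattice has determinant at least `1 - α³`. -/
lemma det_bound {A : Matrix (Fin 3) (Fin 3) ℝ} (hdet : A.det ≠ 0) (hA : Adm A) :
    1 - α ^ 3 ≤ |A.det| := by
  rcases (cornerPts A).eq_empty_or_nonempty with hT | ⟨z, hz⟩
  · linarith [det_bound_of_no_corner hdet hT, alpha_cube_bounds.1]
  -- Reflect so that the corner point has positive coordinates.
  set s : Fin 3 → ℝ := fun i => if 0 < latPt A z i then 1 else -1 with hs
  have hs1 : ∀ i, |s i| = 1 := by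
    intro i
    simp only [hs]
    split_ifs <;> simp
  rw [← abs_det_diagonal_mul A hs1]
  refine det_bound_of_first_point (z₁ := z) ?_ (adm_diagonal_mul hA hs1) ?_ ?_
  · rw [← abs_ne_zero, abs_det_diagonal_mul A hs1, abs_ne_zero]
    exact hdet
  · rwa [cornerPts_diagonal_mul hs1]
  · intro i
    rw [latPt_diagonal_mul]
    simp only [hs]
    have := latPt_ne_zero_of_corner hA hz i
    split_ifs with h
    · linarith
    · have := lt_of_le_of_ne (not_lt.1 h) this
      linarith

/-! ### Packing lattices and admissible lattices -/

lemma isOpen_truncInt : IsOpen truncInt := by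
  have h : truncInt = (⋂ i : Fin 3, {x : Fin 3 → ℝ | |x i| < 1}) ∩
      {x | ∑ i, |x i| < 1 + Real.sqrt 2} := by
    ext x
    simp [truncInt]
  rw [h]
  exact (isOpen_iInter_of_finite fun i => isOpen_lt (by fun_prop) (by fun_prop)).inter
    (isOpen_lt (by fun_prop) (by fun_prop))

lemma truncInt_subset : truncInt ⊆ truncCube := fun x hx =>
  ⟨fun i => (hx.1 i).le, by have := hx.2; rw [Fin.sum_univ_three] at this; exact this.le⟩

lemma interior_truncCube : interior truncCube = truncInt := by
  refine subset_antisymm ?_ (interior_maximal truncInt_subset isOpen_truncInt)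
  intro x hx
  -- A slightly larger multiple of an interior point is still in the truncated cube.
  have hc : Filter.Tendsto (fun t : ℝ => t • x) (nhdsWithin 1 (Set.Ioi 1)) (nhds x) := by
    have : Filter.Tendsto (fun t : ℝ => t • x) (nhds 1) (nhds ((1 : ℝ) • x)) :=
      (continuous_id.smul continuous_const).tendsto 1
    rw [one_smul] at this
    exact this.mono_left nhdsWithin_le_nhds
  have he := (hc.eventually (isOpen_interior.mem_nhds hx)).and
    (self_mem_nhdsWithin : Set.Ioi (1 : ℝ) ∈ nhdsWithin 1 (Set.Ioi 1))
  obtain ⟨t, ht, ht1⟩ := he.exists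
  have ht1 : 1 < t := ht1
  obtain ⟨h1, h2⟩ := interior_subset ht
  simp only [Pi.smul_apply, smul_eq_mul, abs_mul, abs_of_pos (by linarith : 0 < t)] at h1 h2
  refine ⟨fun i => ?_, ?_⟩
  · have := h1 i
    have := abs_nonneg (x i)
    nlinarith
  · rw [Fin.sum_univ_three]
    have := Real.sqrt_nonneg 2
    have hnn : 0 ≤ |x 0| + |x 1| + |x 2| := by positivity
    nlinarith

lemma interior_translate (v : Fin 3 → ℝ) :
    interior ((v + ·) '' truncCube) = (v + ·) '' truncInt := by
  rw [← interior_truncCube]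
  exact ((Homeomorph.addLeft v).image_interior truncCube).symm

lemma latPt_smul (c : ℝ) (A : Matrix (Fin 3) (Fin 3) ℝ) (z : Fin 3 → ℤ) :
    latPt (c • A) z = c • latPt A z := by
  simp [latPt, Matrix.smul_mulVec]

/-- `2 A ℤ³` is a packing lattice of the truncated cube exactly when `A ℤ³` avoids the open
truncated cube. -/
lemma isPackingLattice_iff_adm {A : Matrix (Fin 3) (Fin 3) ℝ} (hdet : A.det ≠ 0) :
    IsPackingLattice truncCube (latticeOf ((2 : ℝ) • A)) ↔ Adm A := by
  constructor
  · intro h z hz hmem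
    -- The midpoint `A z` of `0` and `2 A z` is interior to both translates.
    have hne : (0 : Fin 3 → ℝ) ≠ latPt ((2 : ℝ) • A) z := by
      rw [latPt_smul]
      exact (smul_ne_zero two_ne_zero (latPt_ne_zero hdet hz)).symm
    have hd := h 0 ⟨0, (latPt_zero _).symm⟩ _ ⟨z, rfl⟩ hne
    rw [interior_translate, interior_translate, Set.disjoint_left] at hd
    refine hd (a := latPt A z) ⟨latPt A z, hmem, by simp⟩ ⟨-latPt A z, ?_, ?_⟩
    · simpa [truncInt] using hmem
    · change latPt ((2 : ℝ) • A) z + -latPt A z = latPt A z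
      rw [latPt_smul, two_smul]
      abel
  · rintro h _ ⟨z, rfl⟩ _ ⟨w, rfl⟩ hne
    rw [interior_translate, interior_translate, Set.disjoint_left]
    rintro p ⟨a, ha, rfl⟩ ⟨b, hb, hab⟩
    have hzw : w - z ≠ 0 := by
      intro h0
      rw [sub_eq_zero.1 h0] at hne
      exact hne rfl
    apply h _ hzw
    have e : ∀ i, latPt A (w - z) i = (a i - b i) / 2 := by
      intro i
      have h1 : latPt ((2 : ℝ) • A) w + b = latPt ((2 : ℝ) • A) z + a := hab
      have h2 := congrFun h1 i
      simp only [latPt_smul, Pi.add_apply, Pi.smul_apply, smul_eq_mul] at h2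
      rw [latPt_sub, Pi.sub_apply]
      linarith
    have f : ∀ i, |latPt A (w - z) i| ≤ (|a i| + |b i|) / 2 := by
      intro i
      rw [e, abs_div, abs_of_pos (two_pos : (0 : ℝ) < 2)]
      linarith [abs_sub (a i) (b i)]
    obtain ⟨ha1, ha2⟩ := ha
    obtain ⟨hb1, hb2⟩ := hb
    refine ⟨fun i => by linarith [f i, ha1 i, hb1 i], ?_⟩
    rw [Fin.sum_univ_three] at *
    linarith [f 0, f 1, f 2]

/-! ### The optimal lattice -/

/-- The optimal admissible lattice, half of the optimal packing lattice. -/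
noncomputable def optA : Matrix (Fin 3) (Fin 3) ℝ :=
  (Matrix.of ![![1, -α, 0], ![0, 1, -α], ![-α, 0, 1]]).transpose

lemma det_optA : optA.det = 1 - α ^ 3 := by
  rw [optA, Matrix.det_transpose, Matrix.det_fin_three]
  simp
  ring

lemma alpha_lt : α < 0.2 := by
  unfold α
  linarith [sqrt_two_bounds.1]

lemma one_sub_alpha_cube_pos : 0 < 1 - α ^ 3 := by
  have h0 := alpha_cube_bounds.2
  have : α ^ 3 ≤ 0.2 ^ 3 := by
    gcongr
    exact alpha_lt.le
  norm_num at this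
  linarith

/-- The only nonzero points of the optimal lattice in the open cube are `±(1 - α, 1 - α, 1 - α)`,
which are on the boundary of the truncated cube. -/
lemma adm_optA : Adm optA := by
  rintro z hz ⟨h, hs⟩
  have hα0 := alpha_cube_bounds.2
  have hα1 := alpha_lt
  have e0 : latPt optA z 0 = z 0 - α * z 2 := by
    simp [latPt, optA, Matrix.mulVec, dotProduct, Fin.sum_univ_three]; ring
  have e1 : latPt optA z 1 = z 1 - α * z 0 := by
    simp [latPt, optA, Matrix.mulVec, dotProduct, Fin.sum_univ_three]; ring
  have e2 : latPt optA z 2 = z 2 - α * z 1 := by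
    simp [latPt, optA, Matrix.mulVec, dotProduct, Fin.sum_univ_three]; ring
  have h0 := h 0
  have h1 := h 1
  have h2 := h 2
  rw [Fin.sum_univ_three] at hs
  rw [e0, e1, e2] at hs
  rw [e0] at h0
  rw [e1] at h1
  rw [e2] at h2
  have hsum : 1 + Real.sqrt 2 = 3 - 3 * α := by unfold α; ring
  rw [hsum] at hs
  have hz' : ¬ (z 0 = 0 ∧ z 1 = 0 ∧ z 2 = 0) := by
    rintro ⟨a, b, c⟩
    apply hz
    ext i
    fin_cases i <;> assumption
  have bound : ∀ a b : ℤ, |(a : ℝ) - α * b| < 1 → |(a : ℝ)| < 1 + 0.2 * |(b : ℝ)| := by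
    intro a b hab
    have t1 : |(a : ℝ)| ≤ |(a : ℝ) - α * b| + |α * b| := by
      have := abs_add_le ((a : ℝ) - α * b) (α * b)
      simpa using this
    rw [abs_mul α, abs_of_pos hα0] at t1
    have t2 : α * |(b : ℝ)| ≤ 0.2 * |(b : ℝ)| :=
      mul_le_mul_of_nonneg_right hα1.le (abs_nonneg _)
    linarith
  have small : ∀ a : ℤ, |(a : ℝ)| < 2 → a = -1 ∨ a = 0 ∨ a = 1 := by
    intro a ha
    have : |a| < 2 := by exact_mod_cast ha
    rw [abs_lt] at this
    omega
  have b0 := bound _ _ h0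
  have b1 := bound _ _ h1
  have b2 := bound _ _ h2
  have s0 := small (z 0) (by linarith)
  have s1 := small (z 1) (by linarith)
  have s2 := small (z 2) (by linarith)
  clear b0 b1 b2 bound small e0 e1 e2 h
  generalize z 0 = a at *
  generalize z 1 = b at *
  generalize z 2 = c at *
  rw [abs_lt] at h0 h1 h2
  -- A coordinate `a - α c` with `a = ±1` is less than one in absolute value only if `c = a`.
  have imp : ∀ a c : ℤ, (a = -1 ∨ a = 0 ∨ a = 1) → (c = -1 ∨ c = 0 ∨ c = 1) →
      -1 < (a : ℝ) - α * c → (a : ℝ) - α * c < 1 → a = 0 ∨ a = c := by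
    intro a c ha hc g1 g2
    rcases ha with rfl | rfl | rfl <;> rcases hc with rfl | rfl | rfl <;> push_cast at g1 g2 <;>
      first
        | (left; rfl)
        | (right; rfl)
        | (exfalso; linarith)
  have i0 := imp a c s0 s2 h0.1 h0.2
  have i1 := imp b a s1 s0 h1.1 h1.2
  have i2 := imp c b s2 s1 h2.1 h2.2
  have hall : (a = 1 ∧ b = 1 ∧ c = 1) ∨ (a = -1 ∧ b = -1 ∧ c = -1) := by omega
  rcases hall with ⟨rfl, rfl, rfl⟩ | ⟨rfl, rfl, rfl⟩ <;> push_cast at hs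
  · have := le_abs_self (1 - α * 1)
    linarith
  · have := neg_le_abs (-1 - α * -1)
    linarith

/-! ### The density -/

lemma abs_det_two_smul (A : Matrix (Fin 3) (Fin 3) ℝ) : |((2 : ℝ) • A).det| = 8 * |A.det| := by
  rw [Matrix.det_smul, abs_mul]
  norm_num

lemma density_value : 56 * (Real.sqrt 2 - 1) / 3 / (8 * (1 - α ^ 3)) =
    9 / (5 + 3 * Real.sqrt 2) := by
  have h2 : Real.sqrt 2 ^ 2 = 2 := Real.sq_sqrt (by norm_num)
  have hpos := Real.sqrt_nonneg 2
  have hα := one_sub_alpha_cube_pos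
  rw [div_eq_div_iff (by positivity) (by positivity)]
  unfold α
  have h3 : Real.sqrt 2 ^ 3 = 2 * Real.sqrt 2 := by rw [pow_succ, h2]
  ring_nf
  rw [h3, h2]
  ring

/-- The lattice packing density of the truncated cube is `9/(5 + 3√2)`, attained by
the packing lattice `2·B·ℤ³`. -/
theorem stmt_18 :
    packDensity truncCube = 9 / (5 + 3 * Real.sqrt 2) ∧
    IsUnit truncCubeB.det ∧
    IsPackingLattice truncCube (latticeOf truncCubeB) ∧
    (volume truncCube).toReal / |truncCubeB.det| = 9 / (5 + 3 * Real.sqrt 2) := by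
  have hB : truncCubeB = (2 : ℝ) • optA := rfl
  have hα := one_sub_alpha_cube_pos
  have hopt : optA.det ≠ 0 := by rw [det_optA]; exact hα.ne'
  have hdetB : |truncCubeB.det| = 8 * (1 - α ^ 3) := by
    rw [hB, abs_det_two_smul, det_optA, abs_of_pos hα]
  have hunit : IsUnit truncCubeB.det := by
    rw [isUnit_iff_ne_zero, ← abs_ne_zero, hdetB]
    positivity
  have hpack : IsPackingLattice truncCube (latticeOf truncCubeB) := by
    rw [hB, isPackingLattice_iff_adm hopt]
    exact adm_optA
  have hs2 := sqrt_two_bounds.1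
  have hvol : (volume truncCube).toReal = 56 * (Real.sqrt 2 - 1) / 3 := by
    rw [volume_truncCube, ENNReal.toReal_ofReal (by linarith)]
  have hval : (volume truncCube).toReal / |truncCubeB.det| = 9 / (5 + 3 * Real.sqrt 2) := by
    rw [hvol, hdetB, density_value]
  refine ⟨IsGreatest.csSup_eq ⟨⟨truncCubeB, hunit, hpack, hval.symm⟩, ?_⟩, hunit, hpack, hval⟩
  rintro r ⟨B, hBu, hBp, rfl⟩
  obtain ⟨A, rfl⟩ : ∃ A : Matrix (Fin 3) (Fin 3) ℝ, B = (2 : ℝ) • A :=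
    ⟨(1 / 2 : ℝ) • B, by rw [smul_smul]; norm_num⟩
  have hA : A.det ≠ 0 := by
    intro h0
    rw [isUnit_iff_ne_zero, ← abs_ne_zero, abs_det_two_smul, h0] at hBu
    simp at hBu
  have hb := det_bound hA ((isPackingLattice_iff_adm hA).1 hBp)
  rw [← hval, hdetB, abs_det_two_smul]
  gcongr
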